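/- Let (m_N)_{N≥1} be any sequence of integers with m_N = o(N^{3/8}) as N → ∞ (i.e., m_N / N^{3/8} → 0). Then V_d(m_N, N) / V_d(N) is asymptotically equal to (24N)^{−1/4}·exp(−π·m_N² / √(24N)) as N → ∞; that is, the ratio of the two sides tends to 1. -/

import Mathlib

open scoped BigOperators

/-- `IsSCC n l k` says that the list `l = (a_1, ..., a_s)` of nonnegative integers
is a strongly concave composition of `n` with central part at (1-indexed) position `k`:
`a_1 > a_2 > ... > a_{k-1} > a_k < a_{k+1} < ... < a_s` and `a_1 + ... + a_s = n`. -/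
def IsSCC (n : ℕ) (l : List ℕ) (k : ℕ) : Prop :=
  1 ≤ k ∧ k ≤ l.length ∧ l.sum = n ∧
  (∀ i j : Fin l.length, (i : ℕ) < j → (j : ℕ) < k → l.get j < l.get i) ∧
  (∀ i j : Fin l.length, k - 1 ≤ (i : ℕ) → (i : ℕ) < j → l.get i < l.get j)

/-- The rank `s - 2k + 1` of a strongly concave composition with `s` parts and
central part at position `k`. -/
def sccRank (l : List ℕ) (k : ℕ) : ℤ := (l.length : ℤ) - 2 * k + 1

/-- `Vd m n` is the number of strongly concave compositions of `n` with rank `m`. -/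
noncomputable def Vd (m : ℤ) (n : ℕ) : ℕ :=
  Set.ncard {p : List ℕ × ℕ | IsSCC n p.1 p.2 ∧ sccRank p.1 p.2 = m}

/-- `VdTotal n` is the total number of strongly concave compositions of `n`. -/
noncomputable def VdTotal (n : ℕ) : ℕ :=
  Set.ncard {p : List ℕ × ℕ | IsSCC n p.1 p.2}

/-- The partition function, extended by `0` to negative integers. -/
def partitionCount (k : ℤ) : ℕ :=
  if 0 ≤ k then Fintype.card (Nat.Partition k.toNat) else 0

open Real Filter

/-!
Splitting a strongly concave composition at its central part `c` gives
`∑ V_d(m, n) q ^ n x ^ m = ∑_c q ^ c ∏_{j > c} (1 + q ^ j x) (1 + q ^ j / x)`, and the Cauchy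
formula expresses `V_d(m, N)` and `V_d(N)` as integrals of this series. Take `q` on the circle
`|q| = exp (-r ^ 2)` with `6 N r ^ 4 = π ^ 2`, and `x` on the circle `|x| = exp l` with
`l = r ^ 2 m`; this is the saddle point up to an error that is negligible when
`m = o(N ^ (3 / 8))`, i.e. `l ^ 2 = o(r)`. Divided by
`∏_{j ≤ N} (1 + exp (-r² j - l)) (1 + exp (-r² j + l))`, the integrand is essentially the
characteristic function of a family of independent Bernoulli variables. In the angles
`arg q = u r ^ 3`, `arg x = v r` it converges to `4 / 3` times a Gaussian in `(u, v)`: the central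
part `c` loses `c` pairs of factors, each tending to `2 * 2`, and `∑ 4 ^ (-c) = 4 / 3`. An
integrable bound uniform in `N` allows dominated convergence. The same argument with `l = v = 0`
treats `V_d(N)`, and the quotient of the two normalising products, which is asymptotic to
`exp (l ^ 2 / (2 r ^ 2))`, leaves the factor `exp (-r ^ 2 m ^ 2 / 2)`.
-/

/-! ### Strongly concave compositions as triples -/

/-- A strongly concave composition recorded as its central part `c`, the finite set of parts to the
left of `c` and the finite set of parts to the right of `c`; the two monotonicity conditions allow
the composition to be recovered by sorting. -/
abbrev SplitComp := (_ : ℕ) × (Finset ℕ × Finset ℕ)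

namespace SplitComp

/-- The integer of which the split composition is a composition. -/
def size (τ : SplitComp) : ℕ := τ.1 + ∑ j ∈ τ.2.1, j + ∑ j ∈ τ.2.2, j

/-- The rank of a split composition: the excess of right parts over left parts. -/
def rank (τ : SplitComp) : ℤ := (τ.2.2.card : ℤ) - τ.2.1.card

/-- The pair (list of parts, position of the central part) to which `IsSCC` refers. -/
def toList (τ : SplitComp) : List ℕ × ℕ :=
  (τ.2.1.sort (· ≥ ·) ++ τ.1 :: τ.2.2.sort, τ.2.1.card + 1)

/-- The split compositions all of whose parts are at most `N`, the noncentral ones being larger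
than the central one. -/
def upTo (N : ℕ) : Finset SplitComp :=
  (Finset.range (N + 1)).sigma fun c ↦ (Finset.Ioc c N).powerset ×ˢ (Finset.Ioc c N).powerset

end SplitComp

lemma isSCC_iff_pairwise (n : ℕ) (l : List ℕ) (k : ℕ) :
    IsSCC n l k ↔ 1 ≤ k ∧ k ≤ l.length ∧ l.sum = n ∧
      (l.take k).Pairwise (· > ·) ∧ (l.drop (k - 1)).Pairwise (· < ·) := by
  simp only [IsSCC, List.pairwise_iff_getElem, List.getElem_take, List.getElem_drop,
    List.length_take, List.length_drop, List.get_eq_getElem]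
  refine and_congr_right fun hk ↦ and_congr_right fun hkl ↦ and_congr_right fun _ ↦
    and_congr ⟨fun h i j _ hj hij ↦ ?_, fun h i j hij hj ↦ ?_⟩
      ⟨fun h i j _ hj hij ↦ ?_, fun h i j hi hij ↦ ?_⟩
  · exact h ⟨i, by omega⟩ ⟨j, by omega⟩ hij (by simp only; omega)
  · exact h i j (by omega) (by omega) hij
  · exact h ⟨k - 1 + i, by omega⟩ ⟨k - 1 + j, by omega⟩ (by simp) (by simp only; omega)
  · have := h (i - (k - 1)) (j - (k - 1)) (by omega) (by omega) (by omega)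
    simpa only [show k - 1 + (i - (k - 1)) = i by omega,
      show k - 1 + (j - (k - 1)) = j by omega] using this

lemma isSCC_append_cons_iff (n : ℕ) (L R : List ℕ) (c : ℕ) :
    IsSCC n (L ++ c :: R) (L.length + 1) ↔
      (L ++ c :: R).sum = n ∧ (L ++ [c]).Pairwise (· > ·) ∧ (c :: R).Pairwise (· < ·) := by
  have htake : (L ++ c :: R).take (L.length + 1) = L ++ [c] := by simp [List.take_append]
  rw [isSCC_iff_pairwise, htake, Nat.add_sub_cancel, List.drop_left]
  simp

lemma exists_append_cons_of_isSCC {n : ℕ} {l : List ℕ} {k : ℕ} (h : IsSCC n l k) :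
    ∃ L c R, l = L ++ c :: R ∧ k = List.length L + 1 := by
  have hk : 1 ≤ k := h.1
  have hkl : k ≤ l.length := h.2.1
  refine ⟨l.take (k - 1), l[k - 1], l.drop k, ?_, by simp; omega⟩
  conv_lhs => rw [← List.take_append_drop (k - 1) l, List.drop_eq_getElem_cons (by omega),
    Nat.sub_add_cancel hk]

lemma sum_sort_eq_sum (A : Finset ℕ) (r : ℕ → ℕ → Prop) [DecidableRel r] [IsTrans ℕ r]
    [Std.Antisymm r] [Std.Total r] : (A.sort r).sum = ∑ j ∈ A, j := by
  conv_rhs => rw [← Finset.sort_toFinset A r, List.sum_toFinset _ (Finset.sort_nodup A r)]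
  simp

namespace SplitComp

lemma mem_upTo {N : ℕ} {τ : SplitComp} :
    τ ∈ upTo N ↔ τ.1 ≤ N ∧ τ.2.1 ⊆ Finset.Ioc τ.1 N ∧ τ.2.2 ⊆ Finset.Ioc τ.1 N := by
  simp [upTo]

lemma isSCC_toList {N : ℕ} {τ : SplitComp} (hτ : τ ∈ upTo N) :
    IsSCC τ.size τ.toList.1 τ.toList.2 := by
  obtain ⟨c, A, B⟩ := τ
  obtain ⟨-, hA, hB⟩ := mem_upTo.1 hτ
  have h := (isSCC_append_cons_iff (size ⟨c, A, B⟩) (A.sort (· ≥ ·)) B.sort c).2 ?_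
  · simpa [toList] using h
  refine ⟨?_, List.pairwise_append.2 ⟨(Finset.sortedGT_sort A).pairwise, by simp, ?_⟩,
    List.pairwise_cons.2 ⟨?_, (Finset.sortedLT_sort B).pairwise⟩⟩
  · simp only [List.sum_append, List.sum_cons, sum_sort_eq_sum, size]
    ring
  · intro a ha b hb
    simp only [Finset.mem_sort, List.mem_singleton] at ha hb
    exact hb ▸ (Finset.mem_Ioc.1 (hA ha)).1
  · intro b hb
    exact (Finset.mem_Ioc.1 (hB ((Finset.mem_sort _).1 hb))).1

lemma exists_toList_eq {N : ℕ} {l : List ℕ} {k : ℕ} (h : IsSCC N l k) :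
    ∃ τ ∈ upTo N, τ.size = N ∧ τ.toList = (l, k) := by
  obtain ⟨L, c, R, rfl, rfl⟩ := exists_append_cons_of_isSCC h
  obtain ⟨hsum, hL, hR⟩ := (isSCC_append_cons_iff N L R c).1 h
  obtain ⟨hL, -, hcL⟩ := List.pairwise_append.1 hL
  obtain ⟨hcR, hR⟩ := List.pairwise_cons.1 hR
  have nodupL : L.Nodup := hL.imp ne_of_gt
  have nodupR : R.Nodup := hR.imp ne_of_lt
  have sortL : L.toFinset.sort (· ≥ ·) = L :=
    (List.toFinset_sort (· ≥ ·) nodupL).2 (hL.imp le_of_lt)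
  have sortR : R.toFinset.sort (· ≤ ·) = R :=
    (List.toFinset_sort (· ≤ ·) nodupR).2 (hR.imp le_of_lt)
  have part_le {a : ℕ} (ha : a ∈ L ++ c :: R) : a ≤ N :=
    hsum ▸ List.single_le_sum (by simp) a ha
  refine ⟨⟨c, L.toFinset, R.toFinset⟩, mem_upTo.2 ⟨part_le (by simp), fun a ha ↦ ?_, fun a ha ↦ ?_⟩,
    ?_, ?_⟩
  · have ha : a ∈ L := List.mem_toFinset.1 ha
    exact Finset.mem_Ioc.2 ⟨hcL a ha c (by simp), part_le (by simp [ha])⟩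
  · have ha : a ∈ R := List.mem_toFinset.1 ha
    exact Finset.mem_Ioc.2 ⟨hcR a ha, part_le (by simp [ha])⟩
  · rw [List.sum_append, List.sum_cons] at hsum
    simp only [size, List.sum_toFinset _ nodupL, List.sum_toFinset _ nodupR, List.map_id']
    omega
  · simp [toList, sortL, sortR, List.toFinset_card_of_nodup nodupL]

lemma toList_injective : Function.Injective toList := by
  rintro ⟨c, A, B⟩ ⟨c', A', B'⟩ h
  obtain ⟨hlist, hcard⟩ := Prod.mk.inj h
  obtain ⟨hA, hcB⟩ := List.append_inj hlist (by simpa using hcard)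
  obtain ⟨rfl, hB⟩ := List.cons.inj hcB
  have hA : A = A' := by rw [← Finset.sort_toFinset A (· ≥ ·), hA, Finset.sort_toFinset]
  have hB : B = B' := by rw [← Finset.sort_toFinset B (· ≤ ·), hB, Finset.sort_toFinset]
  rw [hA, hB]

lemma sccRank_toList (τ : SplitComp) : sccRank τ.toList.1 τ.toList.2 = τ.rank := by
  simp only [sccRank, toList, rank, List.length_append, List.length_cons, Finset.length_sort]
  push_cast
  ring

lemma ncard_isSCC_rank (P : ℤ → Prop) [DecidablePred P] (N : ℕ) :
    Set.ncard {p : List ℕ × ℕ | IsSCC N p.1 p.2 ∧ P (sccRank p.1 p.2)} =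
      ((upTo N).filter fun τ ↦ τ.size = N ∧ P τ.rank).card := by
  rw [← Finset.card_image_of_injective _ toList_injective, ← Set.ncard_coe_finset]
  congr 1
  ext ⟨l, k⟩
  simp only [Set.mem_ofPred_eq, Finset.coe_image, Set.mem_image, Finset.coe_filter]
  constructor
  · rintro ⟨hscc, hP⟩
    obtain ⟨τ, hτ, hsize, hlist⟩ := exists_toList_eq hscc
    exact ⟨τ, ⟨hτ, hsize, by rwa [← sccRank_toList, hlist]⟩, hlist⟩
  · rintro ⟨τ, ⟨hτ, rfl, hP⟩, hlist⟩
    have hscc := isSCC_toList hτ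
    rw [← sccRank_toList] at hP
    rw [hlist] at hscc hP
    exact ⟨hscc, hP⟩

end SplitComp

lemma Vd_eq_card (m : ℤ) (N : ℕ) :
    Vd m N = ((SplitComp.upTo N).filter fun τ ↦ τ.size = N ∧ τ.rank = m).card :=
  SplitComp.ncard_isSCC_rank (· = m) N

lemma VdTotal_eq_card (N : ℕ) :
    VdTotal N = ((SplitComp.upTo N).filter fun τ ↦ τ.size = N).card := by
  simpa [VdTotal] using SplitComp.ncard_isSCC_rank (fun _ ↦ True) N

/-! ### Cauchy integrals -/

section

open MeasureTheory

/-- The factor `(1 + e^{js - w}) (1 + e^{js + w})` of the generating function: the two summands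
`e^{js ∓ w}` stand for a part `j` on the left and on the right of the central part. -/
noncomputable def pairFactor (s w : ℂ) (j : ℕ) : ℂ :=
  (1 + Complex.exp (j * s - w)) * (1 + Complex.exp (j * s + w))

/-- The generating function `∑ e^{size · s + rank · w}` of the strongly concave compositions with
parts at most `N`, in its form as a sum over the central part `c`. -/
noncomputable def genFun (N : ℕ) (s w : ℂ) : ℂ :=
  ∑ c ∈ Finset.range (N + 1), Complex.exp (c * s) * ∏ j ∈ Finset.Ioc c N, pairFactor s w j

lemma genFun_eq_sum_upTo (N : ℕ) (s w : ℂ) :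
    genFun N s w = ∑ τ ∈ SplitComp.upTo N, Complex.exp (τ.size * s + τ.rank * w) := by
  simp only [genFun, SplitComp.upTo, pairFactor, Finset.sum_sigma]
  refine Finset.sum_congr rfl fun c _ ↦ ?_
  rw [Finset.prod_mul_distrib, Finset.prod_one_add, Finset.prod_one_add, Finset.sum_mul_sum,
    Finset.sum_product, Finset.mul_sum]
  refine Finset.sum_congr rfl fun A _ ↦ ?_
  rw [Finset.mul_sum]
  refine Finset.sum_congr rfl fun B _ ↦ ?_
  rw [← Complex.exp_sum, ← Complex.exp_sum, ← Complex.exp_add, ← Complex.exp_add]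
  simp only [SplitComp.size, SplitComp.rank, Finset.sum_sub_distrib, Finset.sum_add_distrib,
    ← Finset.sum_mul, Finset.sum_const, nsmul_eq_mul]
  push_cast
  ring_nf

/-- The interval over which `u` ranges when the angle `u * ε` runs once over `(-π, π]`. -/
def angleRange (ε : ℝ) : Set ℝ := Set.Ioc (-(π / ε)) (π / ε)

lemma measurableSet_angleRange (ε : ℝ) : MeasurableSet (angleRange ε) := measurableSet_Ioc

lemma abs_mul_le_pi_of_mem_angleRange {ε u : ℝ} (hε : 0 < ε) (hu : u ∈ angleRange ε) :
    |u * ε| ≤ π := by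
  rw [abs_mul, abs_of_pos hε, ← le_div_iff₀ hε, abs_le]
  exact ⟨hu.1.le, hu.2⟩

lemma mem_angleRange_of_abs_mul_lt_pi {ε u : ℝ} (hε : 0 < ε) (hu : |u * ε| < π) :
    u ∈ angleRange ε := by
  rw [abs_mul, abs_of_pos hε, ← lt_div_iff₀ hε, abs_lt] at hu
  exact ⟨hu.1, hu.2.le⟩

lemma integral_exp_int_mul_angle {ε : ℝ} (hε : 0 < ε) (k : ℤ) :
    ∫ u in angleRange ε, Complex.exp (Complex.I * k * (u * ε : ℝ)) =
      if k = 0 then ((2 * π / ε : ℝ) : ℂ) else 0 := by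
  have hle : -(π / ε) ≤ π / ε := by have := div_pos pi_pos hε; linarith
  rw [angleRange, ← intervalIntegral.integral_of_le hle]
  split_ifs with hk
  · subst hk
    simp
    ring
  · have hε' : (ε : ℂ) ≠ 0 := by exact_mod_cast hε.ne'
    have hc : Complex.I * k * ε ≠ 0 := by simp [Complex.I_ne_zero, hk, hε']
    have hexp (u : ℝ) : Complex.exp (Complex.I * k * (u * ε : ℝ)) =
        Complex.exp (Complex.I * k * ε * u) := by push_cast; ring_nf
    have hperiod : Complex.I * k * ε * ((π / ε : ℝ) : ℂ) =
        Complex.I * k * ε * ((-(π / ε) : ℝ) : ℂ) + k * (2 * π * Complex.I) := by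
      push_cast
      field_simp
      ring
    simp_rw [hexp]
    rw [integral_exp_mul_complex hc, hperiod, Complex.exp_add, Complex.exp_int_mul_two_pi_mul_I]
    simp

lemma integral_angleRange_sum_exp {ι : Type*} (s : Finset ι) (a : ι → ℂ) (k : ι → ℤ) {ε : ℝ}
    (hε : 0 < ε) :
    ∫ u in angleRange ε, ∑ i ∈ s, a i * Complex.exp (Complex.I * k i * (u * ε : ℝ)) =
      ((2 * π / ε : ℝ) : ℂ) * ∑ i ∈ s with k i = 0, a i := by
  have hint (i : ι) (_ : i ∈ s) : IntegrableOn
      (fun u : ℝ ↦ a i * Complex.exp (Complex.I * k i * (u * ε : ℝ))) (angleRange ε) :=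
    Continuous.integrableOn_Ioc (by fun_prop)
  rw [integral_finsetSum s hint, Finset.sum_filter, Finset.mul_sum]
  refine Finset.sum_congr rfl fun i _ ↦ ?_
  rw [integral_const_mul, integral_exp_int_mul_angle hε]
  split_ifs <;> ring

lemma integral_angleRange_prod_sum_exp {ι : Type*} (s : Finset ι) (a : ι → ℂ) (k l : ι → ℤ)
    {δ ε : ℝ} (hδ : 0 < δ) (hε : 0 < ε) :
    ∫ p in angleRange δ ×ˢ angleRange ε, ∑ i ∈ s, a i *
        (Complex.exp (Complex.I * k i * (p.1 * δ : ℝ)) *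
          Complex.exp (Complex.I * l i * (p.2 * ε : ℝ))) =
      ((2 * π / δ : ℝ) : ℂ) * ((2 * π / ε : ℝ) : ℂ) * ∑ i ∈ s with k i = 0 ∧ l i = 0, a i := by
  rw [integral_finsetSum, Finset.sum_filter, Finset.mul_sum]
  · refine Finset.sum_congr rfl fun i _ ↦ ?_
    rw [integral_const_mul, Measure.volume_eq_prod,
      setIntegral_prod_mul (fun u : ℝ ↦ Complex.exp (Complex.I * k i * (u * δ : ℝ)))
        fun v : ℝ ↦ Complex.exp (Complex.I * l i * (v * ε : ℝ)),
      integral_exp_int_mul_angle hδ, integral_exp_int_mul_angle hε]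
    by_cases hk : k i = 0 <;> by_cases hl : l i = 0 <;> simp [hk, hl]
    ring
  · intro i _
    refine (Continuous.continuousOn ?_).integrableOn_compact (isCompact_Icc.prod isCompact_Icc)
      |>.mono_set (Set.prod_mono Set.Ioc_subset_Icc_self Set.Ioc_subset_Icc_self)
    fun_prop

/-- The factor `(1 + e^{-tj - l}) (1 + e^{-tj + l})` of the tilted partition function, i.e.
`pairFactor` at the real point `(-t, l)`. -/
noncomputable def tiltFactor (t l : ℝ) (j : ℕ) : ℝ :=
  (1 + Real.exp (-(t * j) - l)) * (1 + Real.exp (-(t * j) + l))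

/-- The normalising constant `∏_{j ≤ N} tiltFactor t l j` of the tilted measure. -/
noncomputable def tiltProd (N : ℕ) (t l : ℝ) : ℝ := ∏ j ∈ Finset.Ioc 0 N, tiltFactor t l j

lemma one_le_tiltFactor (t l : ℝ) (j : ℕ) : 1 ≤ tiltFactor t l j :=
  one_le_mul_of_one_le_of_one_le (le_add_of_nonneg_right (Real.exp_pos _).le)
    (le_add_of_nonneg_right (Real.exp_pos _).le)

lemma tiltProd_pos (N : ℕ) (t l : ℝ) : 0 < tiltProd N t l :=
  Finset.prod_pos fun j _ ↦ one_pos.trans_le (one_le_tiltFactor t l j)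

/-- The argument of `genFun` conjugate to the size: saddle point `-r ^ 2`, angle `u * r ^ 3`. -/
noncomputable def sizePoint (r u : ℝ) : ℂ := -(r ^ 2 : ℝ) + Complex.I * (u * r ^ 3 : ℝ)

/-- The argument of `genFun` conjugate to the rank: tilt `l`, angle `v * r`. -/
noncomputable def rankPoint (r l v : ℝ) : ℂ := l + Complex.I * (v * r : ℝ)

/-- The phase `e^{-iN(ur³) - im(vr)}` that extracts the coefficient of size `N` and rank `m`. -/
noncomputable def phase (N : ℕ) (m r u v : ℝ) : ℂ :=
  Complex.exp (-(Complex.I * N * (u * r ^ 3 : ℝ)) - Complex.I * m * (v * r : ℝ))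

lemma norm_phase (N : ℕ) (m r u v : ℝ) : ‖phase N m r u v‖ = 1 := by
  have harg : -(Complex.I * N * (u * r ^ 3 : ℝ)) - Complex.I * m * (v * r : ℝ) =
      ((-(N * (u * r ^ 3)) - m * (v * r) : ℝ) : ℂ) * Complex.I := by push_cast; ring
  rw [phase, harg, Complex.norm_exp_ofReal_mul_I]

/-- The integrand of the Cauchy integral for the number of strongly concave compositions of size
`N` and rank `m`, in the rescaled angles `u`, `v` and normalised by `tiltProd`. -/
noncomputable def saddleIntegrand (N : ℕ) (m r l u v : ℝ) : ℂ :=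
  phase N m r u v * genFun N (sizePoint r u) (rankPoint r l v) / tiltProd N (r ^ 2) l

lemma continuous_saddleIntegrand (N : ℕ) (m r l : ℝ) :
    Continuous fun p : ℝ × ℝ ↦ saddleIntegrand N m r l p.1 p.2 := by
  unfold saddleIntegrand phase genFun sizePoint rankPoint pairFactor
  fun_prop

lemma phase_mul_genFun (N : ℕ) (m : ℤ) (r l u v : ℝ) :
    phase N m r u v * genFun N (sizePoint r u) (rankPoint r l v) =
      ∑ τ ∈ SplitComp.upTo N, ((Real.exp (-r ^ 2 * τ.size + l * τ.rank) : ℝ) : ℂ) *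
        (Complex.exp (Complex.I * ((τ.size - N : ℤ) : ℂ) * (u * r ^ 3 : ℝ)) *
          Complex.exp (Complex.I * ((τ.rank - m : ℤ) : ℂ) * (v * r : ℝ))) := by
  rw [genFun_eq_sum_upTo, Finset.mul_sum]
  refine Finset.sum_congr rfl fun τ _ ↦ ?_
  rw [phase, sizePoint, rankPoint, Complex.ofReal_exp, ← Complex.exp_add, ← Complex.exp_add,
    ← Complex.exp_add]
  push_cast
  ring_nf

lemma integral_saddleIntegrand (N : ℕ) (m : ℤ) {r : ℝ} (l : ℝ) (hr : 0 < r) :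
    ∫ p in angleRange (r ^ 3) ×ˢ angleRange r, saddleIntegrand N m r l p.1 p.2 =
      ((2 * π / r ^ 3 * (2 * π / r) * Real.exp (-r ^ 2 * N + l * m) * Vd m N /
        tiltProd N (r ^ 2) l : ℝ) : ℂ) := by
  simp_rw [saddleIntegrand, phase_mul_genFun]
  rw [integral_div, integral_angleRange_prod_sum_exp (SplitComp.upTo N) _
    (fun τ ↦ (τ.size : ℤ) - N) (fun τ ↦ τ.rank - m) (by positivity) hr]
  have hfilter : ∑ τ ∈ SplitComp.upTo N with ((τ.size : ℤ) - N = 0 ∧ τ.rank - m = 0),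
      ((Real.exp (-r ^ 2 * τ.size + l * τ.rank) : ℝ) : ℂ) =
        Vd m N * ((Real.exp (-r ^ 2 * N + l * m) : ℝ) : ℂ) := by
    simp only [sub_eq_zero, Nat.cast_inj]
    rw [Vd_eq_card, ← nsmul_eq_mul]
    refine Finset.sum_eq_card_nsmul fun τ hτ ↦ ?_
    rw [(Finset.mem_filter.1 hτ).2.1, (Finset.mem_filter.1 hτ).2.2]
  rw [hfilter]
  push_cast
  ring

lemma integral_saddleIntegrand_zero (N : ℕ) {r : ℝ} (hr : 0 < r) :
    ∫ u in angleRange (r ^ 3), saddleIntegrand N 0 r 0 u 0 =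
      ((2 * π / r ^ 3 * Real.exp (-r ^ 2 * N) * VdTotal N / tiltProd N (r ^ 2) 0 : ℝ) : ℂ) := by
  have hphase (u : ℝ) := phase_mul_genFun N 0 r 0 u 0
  simp only [Int.cast_zero, zero_mul, add_zero, Complex.ofReal_zero, mul_zero, Complex.exp_zero,
    mul_one] at hphase
  simp_rw [saddleIntegrand, hphase]
  rw [integral_div, integral_angleRange_sum_exp (SplitComp.upTo N) _ (fun τ ↦ (τ.size : ℤ) - N)
    (by positivity)]
  have hfilter : ∑ τ ∈ SplitComp.upTo N with ((τ.size : ℤ) - N = 0),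
      ((Real.exp (-r ^ 2 * τ.size) : ℝ) : ℂ) =
        VdTotal N * ((Real.exp (-r ^ 2 * N) : ℝ) : ℂ) := by
    simp only [sub_eq_zero, Nat.cast_inj]
    rw [VdTotal_eq_card, ← nsmul_eq_mul]
    refine Finset.sum_eq_card_nsmul fun τ hτ ↦ ?_
    rw [(Finset.mem_filter.1 hτ).2]
  rw [hfilter]
  push_cast
  ring
end

/-! ### Decay away from the saddle point -/

lemma norm_one_add_exp_sq (y ψ : ℝ) :
    ‖1 + Complex.exp (y + Complex.I * ψ)‖ ^ 2 =
      (1 + Real.exp y) ^ 2 - 2 * Real.exp y * (1 - cos ψ) := by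
  have hre : (1 + Complex.exp (y + Complex.I * ψ)).re = 1 + Real.exp y * cos ψ := by
    simp [Complex.exp_re]
  have him : (1 + Complex.exp (y + Complex.I * ψ)).im = Real.exp y * sin ψ := by
    simp [Complex.exp_im]
  rw [← Complex.normSq_eq_norm_sq, Complex.normSq_apply, hre, him]
  linear_combination Real.exp y ^ 2 * Real.sin_sq_add_cos_sq ψ

lemma norm_one_add_exp_le (y ψ : ℝ) :
    ‖1 + Complex.exp (y + Complex.I * ψ)‖ ≤ 1 + Real.exp y := by
  refine (norm_add_le _ _).trans ?_
  simp [Complex.norm_exp]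

lemma one_add_exp_sq_le {y : ℝ} (hy : |y| ≤ 3 / 2) :
    (1 + Real.exp y) ^ 2 ≤ 10 * Real.exp y := by
  have hexp : Real.exp (3 / 2) < 5 := by
    have hsq : Real.exp (3 / 2) ^ 2 = Real.exp 1 ^ 3 := by
      rw [← Real.exp_nat_mul, ← Real.exp_nat_mul]
      norm_num
    have hcube : Real.exp 1 ^ 3 < 2.7182818286 ^ 3 := by
      gcongr
      exact Real.exp_one_lt_d9
    nlinarith [Real.exp_pos (3 / 2)]
  have hcosh : cosh y ≤ cosh (3 / 2) := by
    rw [← Real.cosh_abs]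
    exact Real.cosh_le_cosh.2 (by rwa [abs_abs, abs_of_pos (by norm_num : (0 : ℝ) < 3 / 2)])
  have hcosh' : cosh (3 / 2) ≤ 4 := by
    rw [Real.cosh_eq]
    have := Real.exp_le_one_iff.2 (by norm_num : -(3 / 2 : ℝ) ≤ 0)
    linarith
  have hinv : Real.exp y * Real.exp (-y) = 1 := by rw [← Real.exp_add]; simp
  rw [Real.cosh_eq] at hcosh
  nlinarith [Real.exp_pos y]

lemma norm_one_add_exp_le_mul_exp {y : ℝ} (hy : |y| ≤ 3 / 2) (ψ : ℝ) :
    ‖1 + Complex.exp (y + Complex.I * ψ)‖ ≤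
      (1 + Real.exp y) * Real.exp (-(1 / 10) * (1 - cos ψ)) := by
  refine le_of_sq_le_sq ?_ (by positivity)
  have hexp : Real.exp (-(1 / 10) * (1 - cos ψ)) ^ 2 = Real.exp (-(1 / 5) * (1 - cos ψ)) := by
    rw [← Real.exp_nat_mul]
    congr 1
    push_cast
    ring
  have hcos : 0 ≤ 1 - cos ψ := by linarith [cos_le_one ψ]
  rw [norm_one_add_exp_sq, mul_pow, hexp]
  calc (1 + Real.exp y) ^ 2 - 2 * Real.exp y * (1 - cos ψ)
      ≤ (1 + Real.exp y) ^ 2 * (-(1 / 5) * (1 - cos ψ) + 1) := by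
        nlinarith [one_add_exp_sq_le hy]
    _ ≤ (1 + Real.exp y) ^ 2 * Real.exp (-(1 / 5) * (1 - cos ψ)) := by
        gcongr
        exact Real.add_one_le_exp _

lemma pairFactor_eq_mul (t l θ α : ℝ) (j : ℕ) :
    pairFactor (-t + Complex.I * θ) (l + Complex.I * α) j =
      (1 + Complex.exp ((-(t * j) - l : ℝ) + Complex.I * (j * θ - α : ℝ))) *
      (1 + Complex.exp ((-(t * j) + l : ℝ) + Complex.I * (j * θ + α : ℝ))) := by
  unfold pairFactor
  congr 3 <;> · push_cast; ring

lemma norm_pairFactor_le (t l θ α : ℝ) (j : ℕ) :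
    ‖pairFactor (-t + Complex.I * θ) (l + Complex.I * α) j‖ ≤ tiltFactor t l j := by
  rw [pairFactor_eq_mul, norm_mul]
  exact mul_le_mul (norm_one_add_exp_le _ _) (norm_one_add_exp_le _ _) (norm_nonneg _)
    (by positivity)

/-- The exponent of the decay of `pairFactor` relative to `tiltFactor` away from the saddle point,
at angles `θ` (conjugate to the size) and `α` (conjugate to the rank). -/
noncomputable def angularDecay (θ α : ℝ) (j : ℕ) : ℝ := (1 / 5) * (1 - cos (j * θ) * cos α)

lemma abs_cos_mul_cos_le_one (x y : ℝ) : |cos x * cos y| ≤ 1 := by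
  rw [abs_mul]
  exact mul_le_one₀ (abs_cos_le_one x) (abs_nonneg _) (abs_cos_le_one y)

lemma angularDecay_nonneg (θ α : ℝ) (j : ℕ) : 0 ≤ angularDecay θ α j := by
  unfold angularDecay
  linarith [(abs_le.1 (abs_cos_mul_cos_le_one (j * θ) α)).2]

lemma angularDecay_le (θ α : ℝ) (j : ℕ) : angularDecay θ α j ≤ 2 / 5 := by
  unfold angularDecay
  linarith [(abs_le.1 (abs_cos_mul_cos_le_one (j * θ) α)).1]

lemma norm_pairFactor_le_mul_exp {t l : ℝ} (θ α : ℝ) {j : ℕ} (ht : 0 ≤ t) (hj : t * j ≤ 1)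
    (hl : |l| ≤ 1 / 2) :
    ‖pairFactor (-t + Complex.I * θ) (l + Complex.I * α) j‖ ≤
      tiltFactor t l j * Real.exp (-angularDecay θ α j) := by
  have htj : 0 ≤ t * j := by positivity
  obtain ⟨hl₁, hl₂⟩ := abs_le.1 hl
  have hleft := norm_one_add_exp_le_mul_exp (y := -(t * j) - l)
    (abs_le.2 ⟨by linarith, by linarith⟩) (j * θ - α)
  have hright := norm_one_add_exp_le_mul_exp (y := -(t * j) + l)
    (abs_le.2 ⟨by linarith, by linarith⟩) (j * θ + α)
  rw [pairFactor_eq_mul, norm_mul]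
  refine (mul_le_mul hleft hright (norm_nonneg _) (by positivity)).trans_eq ?_
  rw [mul_mul_mul_comm, ← Real.exp_add, tiltFactor, angularDecay, cos_sub, cos_add]
  ring_nf

lemma tiltFactor_eq (t l : ℝ) (j : ℕ) :
    tiltFactor t l j = 1 + 2 * Real.exp (-(t * j)) * cosh l + Real.exp (-(t * j)) ^ 2 := by
  have hinv : Real.exp (-l) * Real.exp l = 1 := by rw [← Real.exp_add]; simp
  rw [tiltFactor, sub_eq_add_neg, Real.exp_add, Real.exp_add, Real.cosh_eq]
  linear_combination Real.exp (-(t * j)) ^ 2 * hinv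

lemma le_tiltFactor {t : ℝ} (l : ℝ) {j : ℕ} (hj : t * j ≤ 1) : 1.84 ≤ tiltFactor t l j := by
  have hexp : 0.36 ≤ Real.exp (-(t * j)) := by
    refine le_trans ?_ (Real.exp_le_exp.2 (neg_le_neg hj))
    rw [Real.exp_neg, le_inv_comm₀ (by norm_num) (Real.exp_pos _)]
    linarith [Real.exp_one_lt_d9]
  rw [tiltFactor_eq]
  nlinarith [Real.one_le_cosh l]

lemma one_le_tiltFactor_mul_exp {t : ℝ} (l θ α : ℝ) {j : ℕ} (hj : t * j ≤ 1) :
    1 ≤ 9 / 10 * (tiltFactor t l j * Real.exp (-angularDecay θ α j)) := by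
  have hexp : 0.64 ≤ Real.exp (-angularDecay θ α j) := by
    calc (0.64 : ℝ) = (-(1 / 5) + 1) ^ 2 := by norm_num
      _ ≤ Real.exp (-(1 / 5)) ^ 2 := by
        have := Real.add_one_le_exp (-(1 / 5) : ℝ)
        gcongr
      _ = Real.exp (-(2 / 5)) := by rw [← Real.exp_nat_mul]; norm_num
      _ ≤ _ := Real.exp_le_exp.2 (neg_le_neg (angularDecay_le θ α j))
  nlinarith [le_tiltFactor l hj]

lemma prod_Ioc_ite_le {M : Type*} [CommMonoid M] (f : ℕ → M) (N K : ℕ) :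
    ∏ j ∈ Finset.Ioc 0 N, (if j ≤ K then f j else 1) = ∏ j ∈ Finset.Ioc 0 (min N K), f j := by
  rw [← Finset.prod_filter]
  congr 1
  ext j
  simp only [Finset.mem_filter, Finset.mem_Ioc, le_min_iff, and_assoc]

lemma prod_norm_pairFactor_le {N K c : ℕ} {t l : ℝ} (θ α : ℝ) (ht : 0 ≤ t) (hK : t * K ≤ 1)
    (hKN : K ≤ N) (hl : |l| ≤ 1 / 2) (hc : c ≤ N) :
    ∏ j ∈ Finset.Ioc c N, ‖pairFactor (-t + Complex.I * θ) (l + Complex.I * α) j‖ ≤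
      (9 / 10) ^ min c K * Real.exp (-∑ j ∈ Finset.Ioc 0 K, angularDecay θ α j) *
        tiltProd N t l := by
  have htj {j : ℕ} (hj : j ≤ K) : t * j ≤ 1 := le_trans (by gcongr) hK
  set d : ℕ → ℝ := fun j ↦ if j ≤ K then Real.exp (-angularDecay θ α j) else 1 with hd
  have hprod : ∏ j ∈ Finset.Ioc 0 N, d j =
      Real.exp (-∑ j ∈ Finset.Ioc 0 K, angularDecay θ α j) := by
    rw [prod_Ioc_ite_le, min_eq_right hKN, ← Finset.sum_neg_distrib, Real.exp_sum]
  have hlow : 1 ≤ (9 / 10) ^ min c K * ∏ j ∈ Finset.Ioc 0 c, d j * tiltFactor t l j := by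
    have hpow : (9 / 10 : ℝ) ^ min c K = ∏ j ∈ Finset.Ioc 0 c, if j ≤ K then 9 / 10 else 1 := by
      simp only [prod_Ioc_ite_le, Finset.prod_const, Nat.card_Ioc, Nat.sub_zero]
    rw [hpow, ← Finset.prod_mul_distrib]
    refine Finset.one_le_prod fun j _ ↦ ?_
    by_cases hj : j ≤ K
    · simpa only [hd, hj, if_true, mul_comm] using one_le_tiltFactor_mul_exp l θ α (htj hj)
    · simpa only [hd, hj, if_false, one_mul] using one_le_tiltFactor t l j
  have hhigh : ∏ j ∈ Finset.Ioc c N, ‖pairFactor (-t + Complex.I * θ) (l + Complex.I * α) j‖ ≤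
      ∏ j ∈ Finset.Ioc c N, d j * tiltFactor t l j := by
    refine Finset.prod_le_prod (fun j _ ↦ norm_nonneg _) fun j _ ↦ ?_
    by_cases hj : j ≤ K
    · simpa only [hd, hj, if_true, mul_comm] using norm_pairFactor_le_mul_exp θ α ht (htj hj) hl
    · simpa only [hd, hj, if_false, one_mul] using norm_pairFactor_le t l θ α j
  calc _ ≤ ∏ j ∈ Finset.Ioc c N, d j * tiltFactor t l j := hhigh
    _ ≤ ((9 / 10) ^ min c K * ∏ j ∈ Finset.Ioc 0 c, d j * tiltFactor t l j) *
        ∏ j ∈ Finset.Ioc c N, d j * tiltFactor t l j :=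
      le_mul_of_one_le_left ((Finset.prod_nonneg fun j _ ↦ norm_nonneg _).trans hhigh) hlow
    _ = _ := by
      rw [mul_assoc, Finset.prod_Ioc_consecutive _ (Nat.zero_le c) hc, Finset.prod_mul_distrib,
        hprod, tiltProd, mul_assoc]

lemma two_mul_sin_half_mul_sum_cos (θ : ℝ) (J : ℕ) :
    2 * sin (θ / 2) * ∑ j ∈ Finset.Ioc 0 J, cos (j * θ) =
      sin (J * θ + θ / 2) - sin (θ / 2) := by
  induction J with
  | zero => simp
  | succ J ih =>
    have hshift : (J : ℝ) * θ + θ / 2 = (J + 1) * θ - θ / 2 := by ring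
    rw [Finset.sum_Ioc_succ_top (Nat.zero_le J), mul_add, ih, hshift, Nat.cast_succ, sin_sub,
      sin_add]
    ring

lemma abs_mul_abs_sum_cos_le_pi {θ : ℝ} (hθ : |θ| ≤ π) (J : ℕ) :
    |θ| * |∑ j ∈ Finset.Ioc 0 J, cos (j * θ)| ≤ π := by
  set S := ∑ j ∈ Finset.Ioc 0 J, cos (j * θ)
  have hjordan : |θ| ≤ π * |sin (θ / 2)| := by
    have hhalf : |θ / 2| = |θ| / 2 := by rw [abs_div, abs_two]
    have h := Real.mul_abs_le_abs_sin (x := θ / 2) (by rw [hhalf]; linarith)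
    rw [hhalf] at h
    calc |θ| = π * (2 / π * (|θ| / 2)) := by field_simp
      _ ≤ π * |sin (θ / 2)| := by gcongr
  have hdirichlet : 2 * (|sin (θ / 2)| * |S|) ≤ 2 := by
    have h := congrArg abs (two_mul_sin_half_mul_sum_cos θ J)
    rw [abs_mul, abs_mul, abs_two, mul_assoc] at h
    rw [h]
    refine (abs_sub _ _).trans ?_
    linarith [abs_sin_le_one (J * θ + θ / 2), abs_sin_le_one (θ / 2)]
  calc |θ| * |S| ≤ π * |sin (θ / 2)| * |S| := by gcongr
    _ = π * (|sin (θ / 2)| * |S|) := mul_assoc _ _ _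
    _ ≤ π * 1 := by gcongr; linarith
    _ = π := mul_one π

lemma cube_div_three_le_sum_sq (K : ℕ) :
    (K : ℝ) ^ 3 / 3 ≤ ∑ j ∈ Finset.Ioc 0 K, (j : ℝ) ^ 2 := by
  induction K with
  | zero => simp
  | succ K ih =>
    rw [Finset.sum_Ioc_succ_top (Nat.zero_le K)]
    push_cast
    nlinarith [Nat.cast_nonneg (α := ℝ) K]

lemma le_angularDecay {θ α : ℝ} {j : ℕ} (hα : |α| ≤ π) (hj : |j * θ| ≤ 1) :
    (1 / 5) * (2 / π ^ 2 * (j * θ) ^ 2 + α ^ 2 / π ^ 2) ≤ angularDecay θ α j := by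
  have hθ := Real.cos_le_one_sub_mul_cos_sq (hj.trans (by linarith [pi_gt_three]))
  have hα := Real.cos_le_one_sub_mul_cos_sq hα
  have hhalf : 1 / 2 ≤ cos (j * θ) := by
    linarith [Real.one_sub_sq_div_two_le_cos (x := j * θ), (sq_le_one_iff_abs_le_one _).2 hj]
  have hα' : α ^ 2 / π ^ 2 = 1 / 2 * (2 / π ^ 2 * α ^ 2) := by ring
  rw [hα', angularDecay]
  nlinarith [cos_le_one α]

lemma le_sum_angularDecay {θ α : ℝ} {K : ℕ} (hα : |α| ≤ π) (hK : K * |θ| ≤ 1) :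
    (1 / 5) * (2 / (3 * π ^ 2) * K ^ 3 * θ ^ 2 + K * α ^ 2 / π ^ 2) ≤
      ∑ j ∈ Finset.Ioc 0 K, angularDecay θ α j := by
  have hterm (j : ℕ) (hj : j ∈ Finset.Ioc 0 K) :
      (1 / 5) * (2 / π ^ 2 * (j * θ) ^ 2 + α ^ 2 / π ^ 2) ≤ angularDecay θ α j := by
    refine le_angularDecay hα (le_trans ?_ hK)
    rw [abs_mul, Nat.abs_cast]
    gcongr
    exact (Finset.mem_Ioc.1 hj).2
  have hsq : 2 / (3 * π ^ 2) * K ^ 3 * θ ^ 2 ≤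
      2 / π ^ 2 * (∑ j ∈ Finset.Ioc 0 K, (j : ℝ) ^ 2) * θ ^ 2 := by
    calc 2 / (3 * π ^ 2) * K ^ 3 * θ ^ 2 = 2 / π ^ 2 * ((K : ℝ) ^ 3 / 3) * θ ^ 2 := by field_simp
      _ ≤ _ := by gcongr; exact cube_div_three_le_sum_sq K
  calc _ ≤ (1 / 5) * (2 / π ^ 2 * (∑ j ∈ Finset.Ioc 0 K, (j : ℝ) ^ 2) * θ ^ 2 +
          K * α ^ 2 / π ^ 2) := by gcongr
    _ = ∑ j ∈ Finset.Ioc 0 K, (1 / 5) * (2 / π ^ 2 * (j * θ) ^ 2 + α ^ 2 / π ^ 2) := by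
      simp only [mul_pow, ← Finset.mul_sum, Finset.sum_add_distrib, ← Finset.sum_mul,
        Finset.sum_const, Nat.card_Ioc, nsmul_eq_mul, Nat.sub_zero]
      ring
    _ ≤ _ := Finset.sum_le_sum hterm

lemma div_le_sum_angularDecay {θ : ℝ} (α : ℝ) {J : ℕ} (hθ : |θ| ≤ π) (hJ : 4 ≤ J * |θ|) :
    J / 25 ≤ ∑ j ∈ Finset.Ioc 0 J, angularDecay θ α j := by
  set S := ∑ j ∈ Finset.Ioc 0 J, cos (j * θ) with hS
  have hsum : ∑ j ∈ Finset.Ioc 0 J, angularDecay θ α j = (1 / 5) * (J - S * cos α) := by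
    simp [angularDecay, ← Finset.mul_sum, Finset.sum_sub_distrib, ← Finset.sum_mul, hS]
  have hle : S * cos α ≤ |S| := by
    refine (le_abs_self _).trans ?_
    rw [abs_mul]
    exact mul_le_of_le_one_right (abs_nonneg S) (abs_cos_le_one α)
  have hS4 : 4 * |S| ≤ J * π := by
    calc 4 * |S| ≤ (J * |θ|) * |S| := by gcongr
      _ = J * (|θ| * |S|) := mul_assoc _ _ _
      _ ≤ J * π := by gcongr; exact abs_mul_abs_sum_cos_le_pi hθ J
  rw [hsum]
  nlinarith [pi_lt_d2, Nat.cast_nonneg (α := ℝ) J]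

/-- A quarter of the length of the range of parts `j ≤ 1 / r ^ 2` over which `angularDecay` is
summed. -/
noncomputable def cutoff (r : ℝ) : ℕ := ⌊1 / (4 * r ^ 2)⌋₊

lemma sq_mul_cutoff_le {r : ℝ} (hr : 0 < r) : r ^ 2 * cutoff r ≤ 1 / 4 := by
  calc r ^ 2 * cutoff r ≤ r ^ 2 * (1 / (4 * r ^ 2)) := by
        gcongr
        exact Nat.floor_le (by positivity)
    _ = 1 / 4 := by field_simp

lemma le_sq_mul_cutoff {r : ℝ} (hr : 0 < r) (hr4 : r ≤ 1 / 4) : 1 / 8 ≤ r ^ 2 * cutoff r := by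
  have hfloor : r ^ 2 * (1 / (4 * r ^ 2)) ≤ r ^ 2 * (cutoff r + 1) := by
    gcongr
    exact (Nat.lt_floor_add_one _).le
  have hquarter : r ^ 2 * (1 / (4 * r ^ 2)) = 1 / 4 := by field_simp
  nlinarith

lemma exp_neg_sq_div_le (x : ℝ) {a : ℝ} (ha : 1 ≤ a) :
    Real.exp (-(x ^ 2 / a)) ≤ a * (1 + x ^ 2)⁻¹ := by
  have ha' : a * (1 + x ^ 2)⁻¹ = ((1 + x ^ 2) / a)⁻¹ := by rw [inv_div, div_eq_mul_inv]
  rw [Real.exp_neg, ha']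
  refine inv_anti₀ (by positivity) (le_trans ?_ (Real.add_one_le_exp _))
  rw [add_div, add_comm]
  gcongr
  exact (div_le_one (by positivity)).2 ha

lemma sq_pi_le_ten : π ^ 2 ≤ 10 := by nlinarith [pi_lt_d2, pi_pos]

lemma exp_sum_angularDecay_le_of_small_angle {r u v : ℝ} (hr : 0 < r) (hr4 : r ≤ 1 / 4)
    (hv : |v * r| ≤ π) (hu : cutoff r * |u * r ^ 3| ≤ 1) :
    Real.exp (-∑ j ∈ Finset.Ioc 0 (4 * cutoff r), angularDecay (u * r ^ 3) (v * r) j) ≤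
      2 * 10 ^ 10 * ((1 + u ^ 2)⁻¹ * (1 + v ^ 2)⁻¹) := by
  have hK := le_sq_mul_cutoff hr hr4
  set K := cutoff r
  have hπ := sq_pi_le_ten
  have hsubset : ∑ j ∈ Finset.Ioc 0 K, angularDecay (u * r ^ 3) (v * r) j ≤
      ∑ j ∈ Finset.Ioc 0 (4 * K), angularDecay (u * r ^ 3) (v * r) j :=
    Finset.sum_le_sum_of_subset_of_nonneg (Finset.Ioc_subset_Ioc_right (by omega))
      fun j _ _ ↦ angularDecay_nonneg _ _ _
  have hlow : (u ^ 2 + v ^ 2) / 40000 ≤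
      (1 / 5) * (2 / (3 * π ^ 2) * K ^ 3 * (u * r ^ 3) ^ 2 + K * (v * r) ^ 2 / π ^ 2) := by
    calc (u ^ 2 + v ^ 2) / 40000
        ≤ (1 / 5) * (2 / (3 * 10) * ((1 / 8) ^ 3 * u ^ 2) + 1 / 8 * v ^ 2 / 10) := by
          nlinarith [sq_nonneg u, sq_nonneg v]
      _ ≤ (1 / 5) * (2 / (3 * π ^ 2) * ((r ^ 2 * K) ^ 3 * u ^ 2) + r ^ 2 * K * v ^ 2 / π ^ 2) := by
          gcongr
      _ = _ := by ring
  calc _ ≤ Real.exp (-(u ^ 2 / 40000)) * Real.exp (-(v ^ 2 / 40000)) := by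
        rw [← Real.exp_add]
        exact Real.exp_le_exp.2 (by linarith [le_sum_angularDecay hv hu])
    _ ≤ (40000 * (1 + u ^ 2)⁻¹) * (40000 * (1 + v ^ 2)⁻¹) := by
        gcongr <;> exact exp_neg_sq_div_le _ (by norm_num)
    _ = 40000 ^ 2 * ((1 + u ^ 2)⁻¹ * (1 + v ^ 2)⁻¹) := by ring
    _ ≤ _ := by gcongr; norm_num

lemma pow_four_div_le_exp {x : ℝ} (hx : 0 ≤ x) : x ^ 4 / 24 ≤ Real.exp x := by
  simpa [Nat.factorial] using Real.pow_div_factorial_le_exp x hx 4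

lemma exp_sum_angularDecay_le_of_large_angle {r u v : ℝ} (hr : 0 < r) (hr4 : r ≤ 1 / 4)
    (hu : |u * r ^ 3| ≤ π) (hv : |v * r| ≤ π) (hu' : 1 ≤ cutoff r * |u * r ^ 3|) :
    Real.exp (-∑ j ∈ Finset.Ioc 0 (4 * cutoff r), angularDecay (u * r ^ 3) (v * r) j) ≤
      2 * 10 ^ 10 * ((1 + u ^ 2)⁻¹ * (1 + v ^ 2)⁻¹) := by
  have hdecay := div_le_sum_angularDecay (v * r) (J := 4 * cutoff r) hu (by push_cast; linarith)
  have hK : 1 / (50 * r ^ 2) ≤ ((4 * cutoff r : ℕ) : ℝ) / 25 := by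
    rw [div_le_div_iff₀ (by positivity) (by positivity)]
    push_cast
    nlinarith [le_sq_mul_cutoff hr hr4]
  have hπ := sq_pi_le_ten
  have hu10 : u ^ 2 * (r ^ 2) ^ 3 ≤ 10 := by
    calc u ^ 2 * (r ^ 2) ^ 3 = |u * r ^ 3| ^ 2 := by rw [sq_abs]; ring
      _ ≤ π ^ 2 := by gcongr
      _ ≤ 10 := hπ
  have hv10 : v ^ 2 * r ^ 2 ≤ 10 := by
    calc v ^ 2 * r ^ 2 = |v * r| ^ 2 := by rw [sq_abs]; ring
      _ ≤ π ^ 2 := by gcongr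
      _ ≤ 10 := hπ
  have hr2 : r ^ 2 ≤ 1 := pow_le_one₀ hr.le (by linarith)
  have hr6 : (r ^ 2) ^ 3 ≤ 1 := pow_le_one₀ (by positivity) hr2
  calc _ ≤ Real.exp (-(1 / (50 * r ^ 2))) := Real.exp_le_exp.2 (by linarith)
    _ ≤ ((1 / (50 * r ^ 2)) ^ 4 / 24)⁻¹ := by
        rw [Real.exp_neg]
        exact inv_anti₀ (by positivity) (pow_four_div_le_exp (by positivity))
    _ = 24 * 50 ^ 4 * ((r ^ 2) ^ 3 * r ^ 2) := by field_simp
    _ ≤ 24 * 50 ^ 4 * (11 * (1 + u ^ 2)⁻¹ * (11 * (1 + v ^ 2)⁻¹)) := by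
        gcongr
        · rw [← div_eq_mul_inv, le_div_iff₀ (by positivity)]
          linarith
        · rw [← div_eq_mul_inv, le_div_iff₀ (by positivity)]
          linarith
    _ = 24 * 50 ^ 4 * 11 ^ 2 * ((1 + u ^ 2)⁻¹ * (1 + v ^ 2)⁻¹) := by ring
    _ ≤ _ := by gcongr ?_ * _; norm_num

lemma exp_sum_angularDecay_le {r u v : ℝ} (hr : 0 < r) (hr4 : r ≤ 1 / 4) (hu : |u * r ^ 3| ≤ π)
    (hv : |v * r| ≤ π) :
    Real.exp (-∑ j ∈ Finset.Ioc 0 (4 * cutoff r), angularDecay (u * r ^ 3) (v * r) j) ≤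
      2 * 10 ^ 10 * ((1 + u ^ 2)⁻¹ * (1 + v ^ 2)⁻¹) := by
  rcases le_total (cutoff r * |u * r ^ 3|) 1 with h | h
  · exact exp_sum_angularDecay_le_of_small_angle hr hr4 hv h
  · exact exp_sum_angularDecay_le_of_large_angle hr hr4 hu hv h

/-- A summable weight that dominates the contribution of the central part `c`, uniformly in `r`. -/
noncomputable def centralWeight (c : ℕ) : ℝ := 2400 / ((c : ℝ) + 1) ^ 2

lemma centralWeight_nonneg (c : ℕ) : 0 ≤ centralWeight c := by unfold centralWeight; positivity

lemma summable_centralWeight : Summable centralWeight := by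
  have h := (summable_nat_add_iff 1).2 (Real.summable_one_div_nat_pow.2 one_lt_two)
  refine (h.mul_left 2400).congr fun c ↦ ?_
  rw [centralWeight, Nat.cast_succ, mul_one_div]

lemma nine_tenths_pow_le (n : ℕ) : (9 / 10 : ℝ) ^ n ≤ Real.exp (-(n / 10)) := by
  calc (9 / 10 : ℝ) ^ n ≤ Real.exp (-(1 / 10)) ^ n := by
        gcongr
        linarith [Real.add_one_le_exp (-(1 / 10) : ℝ)]
    _ = Real.exp (-(n / 10)) := by rw [← Real.exp_nat_mul]; congr 1; ring

lemma nine_tenths_pow_le_centralWeight (c : ℕ) : (9 / 10 : ℝ) ^ c ≤ centralWeight c := by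
  have hexp : ((c + 1) / 10 : ℝ) ^ 2 / 2 ≤ Real.exp ((c + 1) / 10) := by
    simpa using Real.pow_div_factorial_le_exp (x := (c + 1) / 10) (by positivity) 2
  have he : Real.exp (1 / 10) ≤ 3 := by
    linarith [Real.exp_one_lt_d9, Real.exp_le_exp.2 (by norm_num : (1 / 10 : ℝ) ≤ 1)]
  calc (9 / 10 : ℝ) ^ c ≤ Real.exp (-(c / 10)) := nine_tenths_pow_le c
    _ = Real.exp (1 / 10) * (Real.exp ((c + 1) / 10))⁻¹ := by
        rw [← Real.exp_neg, ← Real.exp_add]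
        congr 1
        ring
    _ ≤ 3 * (((c + 1) / 10 : ℝ) ^ 2 / 2)⁻¹ := by gcongr
    _ = 600 / ((c : ℝ) + 1) ^ 2 := by field_simp; norm_num
    _ ≤ centralWeight c := by unfold centralWeight; gcongr; norm_num

lemma exp_mul_exp_le_centralWeight {r : ℝ} (hr : 0 < r) {c : ℕ} (hc : 1 ≤ c) :
    Real.exp (-(r ^ 2 * c)) * Real.exp (-(1 / (20 * r ^ 2))) ≤ centralWeight c := by
  have hc' : (1 : ℝ) ≤ c := by exact_mod_cast hc
  set x := r ^ 2 * c + 1 / (20 * r ^ 2) with hx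
  have hamgm : (c : ℝ) / 5 ≤ x ^ 2 := by
    have hprod : r ^ 2 * c * (1 / (20 * r ^ 2)) = c / 20 := by field_simp
    nlinarith [sq_nonneg (r ^ 2 * c - 1 / (20 * r ^ 2))]
  have hexp : ((c : ℝ) / 5) ^ 2 / 24 ≤ Real.exp x := by
    calc ((c : ℝ) / 5) ^ 2 / 24 ≤ (x ^ 2) ^ 2 / 24 := by gcongr
      _ = x ^ 4 / 24 := by ring
      _ ≤ Real.exp x := pow_four_div_le_exp (by positivity)
  rw [← Real.exp_add, ← neg_add, ← hx, Real.exp_neg, centralWeight, inv_eq_one_div,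
    div_le_div_iff₀ (Real.exp_pos x) (by positivity)]
  nlinarith

lemma exp_mul_nine_tenths_pow_le_centralWeight {r : ℝ} (hr : 0 < r) (hr4 : r ≤ 1 / 4) (c : ℕ) :
    Real.exp (-(r ^ 2 * c)) * (9 / 10) ^ min c (4 * cutoff r) ≤ centralWeight c := by
  rcases le_or_gt c (4 * cutoff r) with hc | hc
  · rw [min_eq_left hc]
    refine (mul_le_of_le_one_left (by positivity) ?_).trans (nine_tenths_pow_le_centralWeight c)
    exact Real.exp_le_one_iff.2 (neg_nonpos.2 (by positivity))
  · rw [min_eq_right hc.le]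
    refine le_trans ?_ (exp_mul_exp_le_centralWeight hr (by omega : 1 ≤ c))
    gcongr
    refine (nine_tenths_pow_le _).trans (Real.exp_le_exp.2 (neg_le_neg ?_))
    rw [div_le_div_iff₀ (by positivity) (by positivity)]
    push_cast
    nlinarith [le_sq_mul_cutoff hr hr4]

/-- The summand of `genFun N (sizePoint r u) (rankPoint r l v)` with central part `c`, normalised
by `tiltProd`; it is zero for `c > N`. -/
noncomputable def centralTerm (N : ℕ) (r l u v : ℝ) (c : ℕ) : ℂ :=
  if c ≤ N then
    Complex.exp (c * sizePoint r u) *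
      (∏ j ∈ Finset.Ioc c N, pairFactor (sizePoint r u) (rankPoint r l v) j) / tiltProd N (r ^ 2) l
  else 0

lemma genFun_div_tiltProd (N : ℕ) (r l u v : ℝ) :
    genFun N (sizePoint r u) (rankPoint r l v) / tiltProd N (r ^ 2) l =
      ∑' c, centralTerm N r l u v c := by
  rw [tsum_eq_sum (s := Finset.range (N + 1)), genFun, Finset.sum_div]
  · refine Finset.sum_congr rfl fun c hc ↦ ?_
    rw [centralTerm, if_pos (Finset.mem_range_succ_iff.1 hc)]
  · intro c hc
    rw [centralTerm, if_neg (mt Finset.mem_range_succ_iff.2 hc)]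

lemma norm_exp_nat_mul_sizePoint (r u : ℝ) (c : ℕ) :
    ‖Complex.exp (c * sizePoint r u)‖ = Real.exp (-(r ^ 2 * c)) := by
  rw [Complex.norm_exp, sizePoint]
  congr 1
  simp only [Complex.mul_re, Complex.add_re, Complex.neg_re, Complex.ofReal_re, Complex.natCast_re,
    Complex.natCast_im, Complex.I_re, Complex.I_im, Complex.ofReal_im]
  ring

lemma norm_centralTerm_le {N : ℕ} {r l u v : ℝ} (c : ℕ) (hr : 0 < r) (hr4 : r ≤ 1 / 4)
    (hu : |u * r ^ 3| ≤ π) (hv : |v * r| ≤ π) (hl : |l| ≤ 1 / 2) (hN : 1 ≤ r ^ 2 * N) :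
    ‖centralTerm N r l u v c‖ ≤
      centralWeight c * (2 * 10 ^ 10 * ((1 + u ^ 2)⁻¹ * (1 + v ^ 2)⁻¹)) := by
  rw [centralTerm]
  split_ifs with hc
  · have hK := sq_mul_cutoff_le hr
    have hKN : 4 * cutoff r ≤ N := by
      have : r ^ 2 * (4 * cutoff r) ≤ r ^ 2 * N := by linarith
      exact_mod_cast le_of_mul_le_mul_left this (by positivity)
    have hprod := prod_norm_pairFactor_le (u * r ^ 3) (v * r) (sq_nonneg r)
      (by push_cast; linarith) hKN hl hc
    have htilt := tiltProd_pos N (r ^ 2) l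
    rw [norm_div, norm_mul, norm_prod, Complex.norm_real, Real.norm_of_nonneg htilt.le,
      div_le_iff₀ htilt, norm_exp_nat_mul_sizePoint]
    calc _ ≤ _ := mul_le_mul_of_nonneg_left hprod (Real.exp_pos _).le
      _ = (Real.exp (-(r ^ 2 * c)) * (9 / 10) ^ min c (4 * cutoff r)) *
          Real.exp (-∑ j ∈ Finset.Ioc 0 (4 * cutoff r), angularDecay (u * r ^ 3) (v * r) j) *
          tiltProd N (r ^ 2) l := by ring
      _ ≤ _ := by
        gcongr
        · exact centralWeight_nonneg c
        · exact exp_mul_nine_tenths_pow_le_centralWeight hr hr4 c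
        · exact exp_sum_angularDecay_le hr hr4 hu hv
  · have := centralWeight_nonneg c
    rw [norm_zero]
    positivity

/-! ### The Fermi function and its moments -/

section

open MeasureTheory

lemma sum_range_exp_neg_mul_le {a : ℝ} (ha : 0 < a) (ha1 : a ≤ 1) (N : ℕ) :
    ∑ i ∈ Finset.range N, Real.exp (-(a * i)) ≤ 2 / a := by
  have hpow (i : ℕ) : Real.exp (-(a * i)) = Real.exp (-a) ^ i := by
    rw [← Real.exp_nat_mul]
    congr 1
    ring
  have hlt : Real.exp (-a) < 1 := by rwa [Real.exp_lt_one_iff, neg_lt_zero]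
  have hle : Real.exp (-a) ≤ 1 - a / 2 := by
    rw [Real.exp_neg, inv_le_comm₀ (Real.exp_pos _) (by linarith)]
    refine le_trans ?_ (Real.add_one_le_exp a)
    rw [inv_le_iff_one_le_mul₀ (by linarith)]
    nlinarith
  calc ∑ i ∈ Finset.range N, Real.exp (-(a * i))
      = ∑ i ∈ Finset.range N, Real.exp (-a) ^ i := Finset.sum_congr rfl fun i _ ↦ hpow i
    _ ≤ ∑' i : ℕ, Real.exp (-a) ^ i :=
        (summable_geometric_of_lt_one (Real.exp_pos _).le hlt).sum_le_tsum _
          fun i _ ↦ by positivity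
    _ = (1 - Real.exp (-a))⁻¹ := tsum_geometric_of_lt_one (Real.exp_pos _).le hlt
    _ ≤ (a / 2)⁻¹ := inv_anti₀ (by positivity) (by linarith)
    _ = 2 / a := inv_div a 2

lemma sum_Ioc_exp_neg_mul_le {a : ℝ} (ha : 0 < a) (ha1 : a ≤ 1) (N : ℕ) :
    ∑ j ∈ Finset.Ioc 0 N, Real.exp (-(a * j)) ≤ 2 / a := by
  refine le_trans (Finset.sum_le_sum_of_subset_of_nonneg (t := Finset.range (N + 1)) ?_ ?_)
    (sum_range_exp_neg_mul_le ha ha1 (N + 1))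
  · intro j hj
    exact Finset.mem_range_succ_iff.2 (Finset.mem_Ioc.1 hj).2
  · intro j _ _
    positivity

lemma abs_sub_mul_sub_integral_le {F F' : ℝ → ℝ} {a b B : ℝ} (hab : a ≤ b)
    (hF : ∀ x, HasDerivAt F (F' x) x) (hF' : ∀ x ∈ Set.Icc a b, |F' x| ≤ B) :
    |(b - a) * F b - ∫ x in a..b, F x| ≤ B * (b - a) ^ 2 := by
  have hcont : Continuous F := continuous_iff_continuousAt.2 fun x ↦ (hF x).continuousAt
  have hB : 0 ≤ B := (abs_nonneg _).trans (hF' a (Set.left_mem_Icc.2 hab))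
  have hconst : (b - a) * F b = ∫ _ in a..b, F b := by
    rw [intervalIntegral.integral_const, smul_eq_mul]
  rw [hconst, ← intervalIntegral.integral_sub intervalIntegrable_const
    (hcont.intervalIntegrable a b)]
  have hpt (x : ℝ) (hx : x ∈ Set.uIoc a b) : ‖F b - F x‖ ≤ B * (b - a) := by
    rw [Set.uIoc_of_le hab] at hx
    refine ((convex_Icc a b).norm_image_sub_le_of_norm_hasDerivWithin_le
      (fun y _ ↦ (hF y).hasDerivWithinAt) hF' (Set.Ioc_subset_Icc_self hx)
      (Set.right_mem_Icc.2 hab)).trans ?_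
    rw [Real.norm_of_nonneg (sub_nonneg.2 hx.2)]
    gcongr
    exact hx.1.le
  refine (intervalIntegral.norm_integral_le_of_norm_le_const hpt).trans_eq ?_
  rw [abs_of_nonneg (sub_nonneg.2 hab)]
  ring

lemma integrableOn_Ioi_of_abs_le_exp {F : ℝ → ℝ} {C : ℝ} (hF : Continuous F)
    (hb : ∀ x, 0 ≤ x → |F x| ≤ C * Real.exp (-(x / 2))) : IntegrableOn F (Set.Ioi 0) := by
  refine Integrable.mono' ((integrableOn_exp_mul_Ioi (by norm_num : (-(1 / 2) : ℝ) < 0) 0).const_mul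
    C) hF.aestronglyMeasurable ?_
  refine (ae_restrict_iff' measurableSet_Ioi).2 (ae_of_all _ fun x hx ↦ ?_)
  refine (hb x (le_of_lt hx)).trans_eq ?_
  congr 2
  ring

lemma abs_integral_Ioi_le {F : ℝ → ℝ} {C a : ℝ} (ha : 0 ≤ a)
    (hb : ∀ x, 0 ≤ x → |F x| ≤ C * Real.exp (-(x / 2))) :
    |∫ x in Set.Ioi a, F x| ≤ 2 * C * Real.exp (-(a / 2)) := by
  have hle : ‖∫ x in Set.Ioi a, F x‖ ≤ ∫ x in Set.Ioi a, C * Real.exp (-(1 / 2) * x) := by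
    refine norm_integral_le_of_norm_le
      ((integrableOn_exp_mul_Ioi (by norm_num) _).const_mul C) ?_
    refine (ae_restrict_iff' measurableSet_Ioi).2 (ae_of_all _ fun x hx ↦ ?_)
    refine (hb x (ha.trans (le_of_lt hx))).trans_eq ?_
    congr 2
    ring
  refine hle.trans_eq ?_
  rw [integral_const_mul, integral_exp_mul_Ioi (by norm_num)]
  ring_nf

lemma sum_Ioc_eq_sum_range_succ {M : Type*} [AddCommMonoid M] (f : ℕ → M) (N : ℕ) :
    ∑ j ∈ Finset.Ioc 0 N, f j = ∑ i ∈ Finset.range N, f (i + 1) := by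
  induction N with
  | zero => simp
  | succ n ih => rw [Finset.sum_Ioc_succ_top (by lia), Finset.sum_range_succ, ih]

lemma abs_mul_sum_sub_integral_le {F F' : ℝ → ℝ} {C t : ℝ}
    (hF : ∀ x, HasDerivAt F (F' x) x)
    (hb' : ∀ x, 0 ≤ x → |F' x| ≤ C * Real.exp (-(x / 2))) (ht : 0 < t) (ht1 : t ≤ 1) (N : ℕ) :
    |t * ∑ j ∈ Finset.Ioc 0 N, F (t * j) - ∫ x in (0 : ℝ)..(t * N), F x| ≤ 4 * C * t := by
  have hcont : Continuous F := continuous_iff_continuousAt.2 fun x ↦ (hF x).continuousAt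
  have hC : 0 ≤ C := by simpa using (abs_nonneg _).trans (hb' 0 le_rfl)
  have hcell (i : ℕ) : |t * F (t * (i + 1 : ℕ)) - ∫ x in (t * i)..(t * (i + 1 : ℕ)), F x| ≤
      C * t ^ 2 * Real.exp (-(t / 2 * i)) := by
    have hlen : t * (i + 1 : ℕ) - t * i = t := by push_cast; ring
    have := abs_sub_mul_sub_integral_le (a := t * i) (b := t * (i + 1 : ℕ))
      (B := C * Real.exp (-(t / 2 * i))) (by linarith) hF fun x hx ↦ by
        refine (hb' x (le_trans (by positivity) hx.1)).trans ?_
        gcongr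
        linarith [hx.1]
    rw [hlen] at this
    exact this.trans_eq (by ring)
  have hadj := intervalIntegral.sum_integral_adjacent_intervals (f := F) (μ := volume)
    (a := fun i : ℕ ↦ t * i) (n := N) fun k _ ↦ hcont.intervalIntegrable _ _
  simp only [Nat.cast_zero, mul_zero] at hadj
  rw [← hadj, sum_Ioc_eq_sum_range_succ, Finset.mul_sum, ← Finset.sum_sub_distrib]
  calc _ ≤ ∑ i ∈ Finset.range N, C * t ^ 2 * Real.exp (-(t / 2 * i)) :=
        (Finset.abs_sum_le_sum_abs _ _).trans (Finset.sum_le_sum fun i _ ↦ hcell i)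
    _ = C * t ^ 2 * ∑ i ∈ Finset.range N, Real.exp (-(t / 2 * i)) := by rw [Finset.mul_sum]
    _ ≤ C * t ^ 2 * (2 / (t / 2)) := by
        gcongr
        exact sum_range_exp_neg_mul_le (by linarith) (by linarith) N
    _ = 4 * C * t := by field_simp; ring

lemma abs_mul_sum_sub_integral_Ioi_le {F F' : ℝ → ℝ} {C t : ℝ} {N : ℕ}
    (hF : ∀ x, HasDerivAt F (F' x) x)
    (hb : ∀ x, 0 ≤ x → |F x| ≤ C * Real.exp (-(x / 2)))
    (hb' : ∀ x, 0 ≤ x → |F' x| ≤ C * Real.exp (-(x / 2)))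
    (ht : 0 < t) (ht1 : t ≤ 1) (hN : 1 ≤ t ^ 2 * N) :
    |t * ∑ j ∈ Finset.Ioc 0 N, F (t * j) - ∫ x in Set.Ioi 0, F x| ≤ 8 * C * t := by
  have hcont : Continuous F := continuous_iff_continuousAt.2 fun x ↦ (hF x).continuousAt
  have hC : 0 ≤ C := by simpa using (abs_nonneg _).trans (hb 0 le_rfl)
  have hint := integrableOn_Ioi_of_abs_le_exp hcont hb
  have htN : 0 ≤ t * N := by positivity
  have hexp : Real.exp (-(t * N / 2)) ≤ 2 * t := by
    have hinv : 1 / t ≤ t * N := by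
      rw [div_le_iff₀ ht]
      linarith
    rw [Real.exp_neg, inv_le_comm₀ (Real.exp_pos _) (by positivity)]
    calc (2 * t)⁻¹ = 1 / t / 2 := by field_simp
      _ ≤ t * N / 2 + 1 := by linarith
      _ ≤ _ := Real.add_one_le_exp _
  have htail : |∫ x in Set.Ioi (t * N), F x| ≤ 4 * C * t :=
    calc _ ≤ 2 * C * Real.exp (-(t * N / 2)) := abs_integral_Ioi_le htN hb
      _ ≤ 2 * C * (2 * t) := by gcongr
      _ = 4 * C * t := by ring
  rw [← intervalIntegral.integral_interval_add_Ioi hint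
    (hint.mono_set (Set.Ioi_subset_Ioi htN)), ← sub_sub]
  exact (abs_sub _ _).trans (by linarith [abs_mul_sum_sub_integral_le hF hb' ht ht1 N])

/-- The Fermi function `1 / (1 + exp x)`: the probability that a given part occurs on a given side
of a random composition in the tilted model. -/
noncomputable def fermi (x : ℝ) : ℝ := Real.sigmoid (-x)

/-- The variance of a Bernoulli variable with success probability `fermi x`. -/
noncomputable def fermiVar (x : ℝ) : ℝ := fermi x * (1 - fermi x)

/-- The third cumulant of a Bernoulli variable with success probability `fermi x`. -/
noncomputable def fermiSkew (x : ℝ) : ℝ := fermiVar x * (1 - 2 * fermi x)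

lemma fermi_pos (x : ℝ) : 0 < fermi x := Real.sigmoid_pos _

lemma fermi_lt_one (x : ℝ) : fermi x < 1 := Real.sigmoid_lt_one _

lemma fermi_le_exp_neg (x : ℝ) : fermi x ≤ Real.exp (-x) := by
  rw [fermi, ← Real.sigmoid_mul_rexp_neg]
  exact mul_le_of_le_one_left (Real.exp_pos _).le (Real.sigmoid_le_one x)

lemma fermiVar_pos (x : ℝ) : 0 < fermiVar x :=
  mul_pos (fermi_pos x) (sub_pos.2 (fermi_lt_one x))

lemma fermiVar_le_fermi (x : ℝ) : fermiVar x ≤ fermi x :=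
  mul_le_of_le_one_right (fermi_pos x).le (sub_le_self _ (fermi_pos x).le)

lemma fermiVar_le_exp_neg (x : ℝ) : fermiVar x ≤ Real.exp (-x) :=
  (fermiVar_le_fermi x).trans (fermi_le_exp_neg x)

lemma hasDerivAt_fermi (x : ℝ) : HasDerivAt fermi (-fermiVar x) x := by
  refine ((Real.hasDerivAt_sigmoid (-x)).comp x (hasDerivAt_neg x)).congr_deriv ?_
  rw [fermiVar, fermi]
  ring

lemma hasDerivAt_fermiVar (x : ℝ) : HasDerivAt fermiVar (-fermiSkew x) x := by
  refine ((hasDerivAt_fermi x).mul ((hasDerivAt_fermi x).const_sub 1)).congr_deriv ?_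
  rw [fermiSkew]
  ring

lemma abs_one_sub_two_mul_fermi_le_one (x : ℝ) : |1 - 2 * fermi x| ≤ 1 := by
  rw [abs_le]
  constructor <;> linarith [fermi_pos x, fermi_lt_one x]

lemma abs_fermiSkew_le_exp_neg (x : ℝ) : |fermiSkew x| ≤ Real.exp (-x) := by
  rw [fermiSkew, abs_mul, abs_of_pos (fermiVar_pos x)]
  exact (mul_le_of_le_one_right (fermiVar_pos x).le (abs_one_sub_two_mul_fermi_le_one x)).trans
    (fermiVar_le_exp_neg x)

lemma exp_neg_le_exp_neg_half {x : ℝ} (hx : 0 ≤ x) : Real.exp (-x) ≤ Real.exp (-(x / 2)) :=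
  Real.exp_le_exp.2 (by linarith)

lemma pow_mul_exp_neg_le {x : ℝ} (hx : 0 ≤ x) (n : ℕ) :
    x ^ n * Real.exp (-x) ≤ 2 ^ n * n.factorial * Real.exp (-(x / 2)) := by
  have hpow : x ^ n ≤ 2 ^ n * n.factorial * Real.exp (x / 2) := by
    have := Real.pow_div_factorial_le_exp (x / 2) (by positivity) n
    rw [div_le_iff₀ (by positivity), div_pow, div_le_iff₀ (by positivity)] at this
    linarith
  calc x ^ n * Real.exp (-x)
      ≤ 2 ^ n * n.factorial * Real.exp (x / 2) * Real.exp (-x) := by gcongr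
    _ = 2 ^ n * n.factorial * Real.exp (-(x / 2)) := by
        rw [mul_assoc, ← Real.exp_add]
        congr 2
        ring

lemma integral_fermiVar : ∫ x in Set.Ioi (0 : ℝ), fermiVar x = 1 / 2 := by
  have hlim : Tendsto (fun x ↦ -fermi x) atTop (nhds (-0)) :=
    (Real.tendsto_sigmoid_atBot.comp tendsto_neg_atTop_atBot).neg
  rw [integral_Ioi_of_hasDerivAt_of_nonneg'
    (fun x _ ↦ (hasDerivAt_fermi x).neg.congr_deriv (neg_neg _))
    (fun x _ ↦ (fermiVar_pos x).le) hlim]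
  norm_num [fermi, Real.sigmoid_zero]

lemma hasSum_neg_one_pow_div_sq :
    HasSum (fun n : ℕ ↦ (-1 : ℝ) ^ n / ((n : ℝ) + 1) ^ 2) (π ^ 2 / 12) := by
  have hcos := hasSum_one_div_nat_pow_mul_cos one_ne_zero
    (show (1 / 2 : ℝ) ∈ Set.Icc 0 1 by norm_num)
  have hshift := ((hasSum_nat_add_iff' 1).2 hcos).neg
  convert hshift using 2 with n
  · rfl
  · rw [show 2 * π * ((n + 1 : ℕ) : ℝ) * (1 / 2) = ((n + 1 : ℕ) : ℝ) * π by ring,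
      Real.cos_nat_mul_pi, pow_succ]
    push_cast
    ring
  · simp [Polynomial.bernoulli, Finset.sum_range_succ, bernoulli, bernoulli'_two, Nat.choose]
    ring

lemma hasSum_fermi {x : ℝ} (hx : 0 < x) :
    HasSum (fun n : ℕ ↦ (-1 : ℝ) ^ n * Real.exp (-((n : ℝ) + 1) * x)) (fermi x) := by
  have hlt : ‖-Real.exp (-x)‖ < 1 := by
    rwa [norm_neg, Real.norm_of_nonneg (Real.exp_pos _).le, Real.exp_lt_one_iff, neg_lt_zero]
  convert (hasSum_geometric_of_norm_lt_one hlt).mul_left (Real.exp (-x)) using 2 with n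
  · rfl
  · rw [neg_pow (Real.exp (-x)), ← Real.exp_nat_mul, mul_left_comm, ← Real.exp_add]
    congr 2
    ring
  · rw [fermi, ← Real.sigmoid_mul_rexp_neg, Real.sigmoid_def, sub_neg_eq_add, mul_comm]

lemma integral_mul_fermi : ∫ x in Set.Ioi (0 : ℝ), x * fermi x = π ^ 2 / 12 := by
  have hmellin := hasSum_mellin (a := fun n : ℕ ↦ (-1 : ℂ) ^ n) (p := fun n : ℕ ↦ (n : ℝ) + 1)
    (F := fun x ↦ (fermi x : ℂ)) (s := 2) (fun i ↦ Or.inr (by positivity)) (by norm_num)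
    (fun x hx ↦ by exact_mod_cast Complex.hasSum_ofReal.2 (hasSum_fermi hx))
    (by
      convert hasSum_neg_one_pow_div_sq.summable.norm using 2 with n
      simp)
  have hsum : mellin (fun x ↦ (fermi x : ℂ)) 2 = ((π ^ 2 / 12 : ℝ) : ℂ) := by
    refine hmellin.unique ?_
    convert Complex.hasSum_ofReal.2 hasSum_neg_one_pow_div_sq using 2 with n
    rw [show Complex.Gamma 2 = 1 by simp]
    push_cast
    norm_num
  have hint : mellin (fun x ↦ (fermi x : ℂ)) 2 =
      ((∫ x in Set.Ioi (0 : ℝ), x * fermi x : ℝ) : ℂ) := by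
    rw [mellin, ← integral_complex_ofReal]
    refine setIntegral_congr_fun measurableSet_Ioi fun x _ ↦ ?_
    norm_num
  exact_mod_cast hint.symm.trans hsum

/-- The constant `∫₀^∞ x² e^x / (1 + e^x)² dx`. The number partitioned has variance asymptotic to
`2 * fermiSecondMoment / t ^ 3` in the tilted model of parameter `t`. -/
noncomputable def fermiSecondMoment : ℝ := ∫ x in Set.Ioi (0 : ℝ), x ^ 2 * fermiVar x

lemma sq_mul_fermiVar_le {x : ℝ} (hx : 0 ≤ x) :
    |x ^ 2 * fermiVar x| ≤ 12 * Real.exp (-(x / 2)) := by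
  rw [abs_of_nonneg (mul_nonneg (sq_nonneg x) (fermiVar_pos x).le)]
  calc x ^ 2 * fermiVar x ≤ x ^ 2 * Real.exp (-x) := by gcongr; exact fermiVar_le_exp_neg x
    _ ≤ 2 ^ 2 * Nat.factorial 2 * Real.exp (-(x / 2)) := pow_mul_exp_neg_le hx 2
    _ ≤ 12 * Real.exp (-(x / 2)) := by gcongr; norm_num [Nat.factorial]

lemma fermiSecondMoment_pos : 0 < fermiSecondMoment := by
  have hcont : Continuous fun x ↦ x ^ 2 * fermiVar x :=
    (continuous_pow 2).mul
      (continuous_iff_continuousAt.2 fun x ↦ (hasDerivAt_fermiVar x).continuousAt)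
  rw [fermiSecondMoment, setIntegral_pos_iff_support_of_nonneg_ae
    (ae_of_all _ fun x ↦ mul_nonneg (sq_nonneg x) (fermiVar_pos x).le)
    (integrableOn_Ioi_of_abs_le_exp hcont fun x ↦ sq_mul_fermiVar_le)]
  refine lt_of_lt_of_le (b := volume (Set.Ioi (0 : ℝ))) (by simp) (measure_mono fun x hx ↦ ?_)
  exact ⟨(mul_pos (pow_pos hx 2) (fermiVar_pos x)).ne', hx⟩

section RiemannSums

variable {t : ℝ} {N : ℕ}

lemma abs_mul_sum_fermiVar_sub_le (ht : 0 < t) (ht1 : t ≤ 1) (hN : 1 ≤ t ^ 2 * N) :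
    |t * ∑ j ∈ Finset.Ioc 0 N, fermiVar (t * j) - 1 / 2| ≤ 8 * t := by
  rw [← integral_fermiVar]
  refine (abs_mul_sum_sub_integral_Ioi_le (C := 1) hasDerivAt_fermiVar (fun x hx ↦ ?_)
    (fun x hx ↦ ?_) ht ht1 hN).trans_eq (by ring)
  · rw [abs_of_pos (fermiVar_pos x), one_mul]
    exact (fermiVar_le_exp_neg x).trans (exp_neg_le_exp_neg_half hx)
  · rw [one_mul, abs_neg]
    exact (abs_fermiSkew_le_exp_neg x).trans (exp_neg_le_exp_neg_half hx)

lemma abs_mul_sum_mul_fermi_sub_le (ht : 0 < t) (ht1 : t ≤ 1) (hN : 1 ≤ t ^ 2 * N) :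
    |t * ∑ j ∈ Finset.Ioc 0 N, (t * j) * fermi (t * j) - π ^ 2 / 12| ≤ 24 * t := by
  rw [← integral_mul_fermi]
  have hexp {x : ℝ} (hx : 0 ≤ x) : x * Real.exp (-x) ≤ 2 * Real.exp (-(x / 2)) := by
    simpa using pow_mul_exp_neg_le hx 1
  refine (abs_mul_sum_sub_integral_Ioi_le (C := 3)
    (fun x ↦ (hasDerivAt_id' x).fun_mul (hasDerivAt_fermi x)) (fun x hx ↦ ?_) (fun x hx ↦ ?_)
    ht ht1 hN).trans_eq (by ring)
  · rw [abs_of_nonneg (mul_nonneg hx (fermi_pos x).le)]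
    have := mul_le_mul_of_nonneg_left (fermi_le_exp_neg x) hx
    linarith [hexp hx, Real.exp_pos (-(x / 2))]
  · have hvar := mul_le_mul_of_nonneg_left (fermiVar_le_exp_neg x) hx
    have hvar0 := mul_nonneg hx (fermiVar_pos x).le
    rw [abs_le]
    constructor <;>
      linarith [hexp hx, fermi_le_exp_neg x, exp_neg_le_exp_neg_half hx, fermi_pos x,
        Real.exp_pos (-(x / 2))]

lemma abs_mul_sum_sq_mul_fermiVar_sub_le (ht : 0 < t) (ht1 : t ≤ 1) (hN : 1 ≤ t ^ 2 * N) :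
    |t * ∑ j ∈ Finset.Ioc 0 N, (t * j) ^ 2 * fermiVar (t * j) - fermiSecondMoment| ≤ 96 * t := by
  refine (abs_mul_sum_sub_integral_Ioi_le (C := 12)
    (fun x ↦ (hasDerivAt_pow 2 x).fun_mul (hasDerivAt_fermiVar x))
    (fun x ↦ sq_mul_fermiVar_le) (fun x hx ↦ ?_) ht ht1 hN).trans_eq (by ring)
  have hexp := pow_mul_exp_neg_le hx 1
  have hexp_sq := pow_mul_exp_neg_le hx 2
  have hfst := mul_le_mul_of_nonneg_left (fermiVar_le_exp_neg x) hx
  have hsnd := mul_le_mul_of_nonneg_left (abs_fermiSkew_le_exp_neg x) (sq_nonneg x)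
  norm_num [Nat.factorial] at hexp hexp_sq
  refine (abs_add_le _ _).trans ?_
  rw [abs_mul (x ^ 2), abs_neg, abs_of_nonneg (sq_nonneg x),
    abs_of_nonneg (mul_nonneg (by positivity) (fermiVar_pos x).le)]
  norm_num
  linarith

end RiemannSums

end

lemma abs_le_mul_abs_of_abs_deriv_le {F F' : ℝ → ℝ} {C l : ℝ}
    (hF : ∀ y, HasDerivAt F (F' y) y) (h0 : F 0 = 0) (hb : ∀ y, |y| ≤ |l| → |F' y| ≤ C) :
    |F l| ≤ C * |l| := by
  simpa [h0] using (convex_Icc (-|l|) |l|).norm_image_sub_le_of_norm_hasDerivWithin_le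
    (fun y _ ↦ (hF y).hasDerivWithinAt) (fun y hy ↦ hb y (abs_le.2 hy))
    (x := 0) (y := l) ⟨by simp, abs_nonneg l⟩ ⟨neg_abs_le l, le_abs_self l⟩

lemma abs_symm_diff_sub_le {G G' : ℝ → ℝ} {C x l : ℝ} (hG : ∀ y, HasDerivAt G (G' y) y)
    (hG' : ∀ y, |y| ≤ |l| → |G' (x + y) - G' x| ≤ C * |y|) (hC : 0 ≤ C) :
    |G (x - l) + G (x + l) - 2 * G x| ≤ 2 * C * |l| ^ 2 := by
  refine (abs_le_mul_abs_of_abs_deriv_le (F := fun y ↦ G (x - y) + G (x + y) - 2 * G x)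
    (C := 2 * C * |l|) (fun y ↦ (((hG _).comp_const_sub x y).add
      ((hG _).comp_const_add x y)).sub_const _) (by simp; ring) fun y hy ↦ ?_).trans_eq (by ring)
  have hpos := hG' y hy
  have hneg := hG' (-y) (by rwa [abs_neg])
  rw [abs_neg, ← sub_eq_add_neg] at hneg
  calc |-G' (x - y) + G' (x + y)| = |(G' (x + y) - G' x) - (G' (x - y) - G' x)| := by ring_nf
    _ ≤ C * |y| + C * |y| := (abs_sub _ _).trans (add_le_add hpos hneg)
    _ ≤ C * |l| + C * |l| := by gcongr
    _ = 2 * C * |l| := by ring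

lemma exp_neg_add_le {y : ℝ} (x : ℝ) (hy : |y| ≤ 1 / 2) :
    Real.exp (-(x + y)) ≤ 2 * Real.exp (-x) := by
  have hhalf : Real.exp (1 / 2) ≤ 2 := by
    have hsq : Real.exp (1 / 2) * Real.exp (1 / 2) = Real.exp 1 := by
      rw [← Real.exp_add]
      norm_num
    nlinarith [Real.exp_pos (1 / 2), Real.exp_one_lt_d9]
  rw [neg_add, Real.exp_add, mul_comm]
  gcongr
  exact (Real.exp_le_exp.2 (by linarith [neg_abs_le y])).trans hhalf

lemma abs_sub_le_of_abs_deriv_le_exp {G G' : ℝ → ℝ} {C l : ℝ} (x : ℝ)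
    (hG : ∀ y, HasDerivAt G (G' y) y) (hG' : ∀ y, |G' y| ≤ C * Real.exp (-y))
    (hl : |l| ≤ 1 / 2) : |G (x + l) - G x| ≤ 2 * C * Real.exp (-x) * |l| := by
  have hC : 0 ≤ C := by simpa using (abs_nonneg _).trans (hG' 0)
  refine abs_le_mul_abs_of_abs_deriv_le (F := fun y ↦ G (x + y) - G x)
    (fun y ↦ ((hG _).comp_const_add x y).sub_const _) (by simp) fun y hy ↦ ?_
  calc |G' (x + y)| ≤ C * Real.exp (-(x + y)) := hG' _
    _ ≤ C * (2 * Real.exp (-x)) := by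
        gcongr
        exact exp_neg_add_le x (hy.trans hl)
    _ = 2 * C * Real.exp (-x) := by ring

lemma hasDerivAt_fermiSkew (x : ℝ) :
    HasDerivAt fermiSkew (-fermiSkew x * (1 - 2 * fermi x) + 2 * fermiVar x ^ 2) x := by
  refine ((hasDerivAt_fermiVar x).mul
    (((hasDerivAt_fermi x).const_mul 2).const_sub 1)).congr_deriv ?_
  ring

lemma abs_deriv_fermiSkew_le (x : ℝ) :
    |-fermiSkew x * (1 - 2 * fermi x) + 2 * fermiVar x ^ 2| ≤ 3 * Real.exp (-x) := by
  have hvar : fermiVar x ≤ 1 := (fermiVar_le_fermi x).trans (fermi_lt_one x).le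
  have hskew : |-fermiSkew x * (1 - 2 * fermi x)| ≤ Real.exp (-x) := by
    rw [abs_mul, abs_neg]
    exact (mul_le_of_le_one_right (abs_nonneg _) (abs_one_sub_two_mul_fermi_le_one x)).trans
      (abs_fermiSkew_le_exp_neg x)
  have hsq : |2 * fermiVar x ^ 2| ≤ 2 * Real.exp (-x) := by
    rw [abs_of_nonneg (by positivity)]
    nlinarith [fermiVar_pos x, fermiVar_le_exp_neg x]
  linarith [abs_add_le (-fermiSkew x * (1 - 2 * fermi x)) (2 * fermiVar x ^ 2)]

section

variable {l : ℝ} (x : ℝ) (hl : |l| ≤ 1 / 2)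

include hl

lemma abs_fermiVar_add_sub_le :
    |fermiVar (x + l) - fermiVar x| ≤ 2 * Real.exp (-x) * |l| :=
  (abs_sub_le_of_abs_deriv_le_exp (C := 1) x hasDerivAt_fermiVar
    (fun z ↦ by rw [abs_neg, one_mul]; exact abs_fermiSkew_le_exp_neg z) hl).trans_eq (by ring)

lemma abs_fermi_symm_diff_le :
    |fermi (x - l) + fermi (x + l) - 2 * fermi x| ≤ 4 * Real.exp (-x) * |l| ^ 2 := by
  refine (abs_symm_diff_sub_le (C := 2 * Real.exp (-x)) hasDerivAt_fermi (fun y hy ↦ ?_)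
    (by positivity)).trans_eq (by ring)
  rw [neg_sub_neg, abs_sub_comm]
  exact abs_fermiVar_add_sub_le x (hy.trans hl)

lemma abs_fermiVar_symm_diff_le :
    |fermiVar (x - l) + fermiVar (x + l) - 2 * fermiVar x| ≤ 12 * Real.exp (-x) * |l| ^ 2 := by
  refine (abs_symm_diff_sub_le (C := 6 * Real.exp (-x)) hasDerivAt_fermiVar (fun y hy ↦ ?_)
    (by positivity)).trans_eq (by ring)
  rw [neg_sub_neg, abs_sub_comm]
  exact (abs_sub_le_of_abs_deriv_le_exp x hasDerivAt_fermiSkew abs_deriv_fermiSkew_le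
    (hy.trans hl)).trans_eq (by ring)

lemma abs_fermi_sub_fermi_sub_le :
    |fermi (x - l) - fermi (x + l) - 2 * l * fermiVar x| ≤ 12 * Real.exp (-x) * |l| ^ 3 := by
  refine le_trans (abs_le_mul_abs_of_abs_deriv_le
    (F := fun y ↦ fermi (x - y) - fermi (x + y) - 2 * y * fermiVar x)
    (C := 12 * Real.exp (-x) * |l| ^ 2)
    (fun y ↦ (((hasDerivAt_fermi _).comp_const_sub x y).sub
      ((hasDerivAt_fermi _).comp_const_add x y)).sub
        (((hasDerivAt_id' y).const_mul 2).mul_const (fermiVar x))) (by simp) fun y hy ↦ ?_)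
    (le_of_eq (by ring))
  rw [neg_neg, sub_neg_eq_add, mul_one]
  exact (abs_fermiVar_symm_diff_le x (hy.trans hl)).trans (by gcongr)

end

lemma hasDerivAt_log_one_add_exp_neg (x : ℝ) :
    HasDerivAt (fun x ↦ Real.log (1 + Real.exp (-x))) (-fermi x) x := by
  refine ((((hasDerivAt_neg x).exp).const_add 1).log (by positivity)).congr_deriv ?_
  rw [fermi, ← Real.sigmoid_mul_rexp_neg, Real.sigmoid_def]
  ring

lemma log_tiltFactor (t l : ℝ) (j : ℕ) : Real.log (tiltFactor t l j) =
    Real.log (1 + Real.exp (-(t * j + l))) + Real.log (1 + Real.exp (-(t * j - l))) := by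
  rw [tiltFactor, Real.log_mul (by positivity) (by positivity)]
  ring_nf

lemma abs_log_tiltFactor_sub_le {l : ℝ} (t : ℝ) (j : ℕ) (hl : |l| ≤ 1 / 2) :
    |Real.log (tiltFactor t l j) - Real.log (tiltFactor t 0 j) - l ^ 2 * fermiVar (t * j)| ≤
      12 * Real.exp (-(t * j)) * l ^ 4 := by
  simp only [log_tiltFactor t l]
  refine (abs_le_mul_abs_of_abs_deriv_le
    (F := fun y ↦ Real.log (1 + Real.exp (-(t * j + y))) + Real.log (1 + Real.exp (-(t * j - y))) -
      Real.log (tiltFactor t 0 j) - y ^ 2 * fermiVar (t * j))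
    (C := 12 * Real.exp (-(t * j)) * |l| ^ 3)
    (fun y ↦ ((((hasDerivAt_log_one_add_exp_neg _).comp_const_add (t * j) y).add
      ((hasDerivAt_log_one_add_exp_neg _).comp_const_sub (t * j) y)).sub_const _).sub
        ((hasDerivAt_pow 2 y).mul_const (fermiVar (t * j))))
    (by simp [log_tiltFactor]) fun y hy ↦ ?_).trans_eq ?_
  · have heq : -fermi (t * j + y) + - -fermi (t * j - y) -
        ((2 : ℕ) : ℝ) * y ^ (2 - 1) * fermiVar (t * j) =
        fermi (t * j - y) - fermi (t * j + y) - 2 * y * fermiVar (t * j) := by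
      norm_num
      ring
    rw [heq]
    exact (abs_fermi_sub_fermi_sub_le _ (hy.trans hl)).trans (by gcongr)
  · rw [← (show Even 4 by decide).pow_abs l]
    ring

lemma abs_log_tiltProd_div_sub_le {t l : ℝ} {N : ℕ} (ht : 0 < t) (ht1 : t ≤ 1)
    (hN : 1 ≤ t ^ 2 * N) (hl : |l| ≤ 1 / 2) :
    |Real.log (tiltProd N t l / tiltProd N t 0) - l ^ 2 / (2 * t)| ≤
      24 * (l ^ 4 / t) + 8 * l ^ 2 := by
  have hne (l : ℝ) (j : ℕ) : tiltFactor t l j ≠ 0 :=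
    (one_pos.trans_le (one_le_tiltFactor t l j)).ne'
  set S := ∑ j ∈ Finset.Ioc 0 N, fermiVar (t * j)
  have hlog : |Real.log (tiltProd N t l / tiltProd N t 0) - l ^ 2 * S| ≤ 24 * (l ^ 4 / t) := by
    rw [Real.log_div (tiltProd_pos _ _ _).ne' (tiltProd_pos _ _ _).ne', tiltProd, tiltProd,
      Real.log_prod fun j _ ↦ hne l j, Real.log_prod fun j _ ↦ hne 0 j, Finset.mul_sum,
      ← Finset.sum_sub_distrib, ← Finset.sum_sub_distrib]
    calc _ ≤ ∑ j ∈ Finset.Ioc 0 N, 12 * Real.exp (-(t * j)) * l ^ 4 :=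
          (Finset.abs_sum_le_sum_abs _ _).trans
            (Finset.sum_le_sum fun j _ ↦ abs_log_tiltFactor_sub_le t j hl)
      _ = 12 * l ^ 4 * ∑ j ∈ Finset.Ioc 0 N, Real.exp (-(t * j)) := by
          rw [Finset.mul_sum]
          exact Finset.sum_congr rfl fun j _ ↦ by ring
      _ ≤ 12 * l ^ 4 * (2 / t) := by
          gcongr
          exact sum_Ioc_exp_neg_mul_le ht ht1 N
      _ = 24 * (l ^ 4 / t) := by ring
  have hriemann : |l ^ 2 * S - l ^ 2 / (2 * t)| ≤ 8 * l ^ 2 := by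
    rw [show l ^ 2 * S - l ^ 2 / (2 * t) = l ^ 2 / t * (t * S - 1 / 2) by field_simp, abs_mul,
      abs_of_nonneg (by positivity)]
    calc _ ≤ l ^ 2 / t * (8 * t) := by
          gcongr
          exact abs_mul_sum_fermiVar_sub_le ht ht1 hN
      _ = 8 * l ^ 2 := by field_simp
  exact (abs_sub_le _ (l ^ 2 * S) _).trans (add_le_add hlog hriemann)

/-! ### Approximation by Gaussians -/

lemma norm_prod_sub_prod_le {ι R : Type*} [NormedCommRing R] [NormOneClass R] (s : Finset ι)
    {f g : ι → R} (hf : ∀ i ∈ s, ‖f i‖ ≤ 1) (hg : ∀ i ∈ s, ‖g i‖ ≤ 1) :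
    ‖∏ i ∈ s, f i - ∏ i ∈ s, g i‖ ≤ ∑ i ∈ s, ‖f i - g i‖ := by
  induction s using Finset.cons_induction with
  | empty => simp
  | cons i s hi ih =>
    rw [Finset.forall_mem_cons] at hf hg
    have hprod : ‖∏ j ∈ s, g j‖ ≤ 1 := (s.norm_prod_le g).trans
      (Finset.prod_le_one (fun _ _ ↦ norm_nonneg _) hg.2)
    rw [Finset.prod_cons, Finset.prod_cons, Finset.sum_cons]
    calc ‖f i * ∏ j ∈ s, f j - g i * ∏ j ∈ s, g j‖
        = ‖(f i - g i) * ∏ j ∈ s, g j + f i * (∏ j ∈ s, f j - ∏ j ∈ s, g j)‖ := by ring_nf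
      _ ≤ ‖f i - g i‖ * ‖∏ j ∈ s, g j‖ + ‖f i‖ * ‖∏ j ∈ s, f j - ∏ j ∈ s, g j‖ :=
          (norm_add_le _ _).trans (add_le_add (norm_mul_le _ _) (norm_mul_le _ _))
      _ ≤ ‖f i - g i‖ * 1 + 1 * ∑ j ∈ s, ‖f j - g j‖ := by
          gcongr
          exacts [hf.1, ih hf.2 hg.2]
      _ = ‖f i - g i‖ + ∑ j ∈ s, ‖f j - g j‖ := by rw [mul_one, one_mul]

/-- The characteristic function of the Bernoulli distribution with success probability `p`. -/
noncomputable def bernoulliChar (p ψ : ℝ) : ℂ := 1 - p + p * Complex.exp (Complex.I * ψ)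

/-- The second-order Taylor polynomial at `ψ = 0` of the logarithm of `bernoulliChar p ψ`. -/
noncomputable def bernoulliCumulant (p ψ : ℝ) : ℂ :=
  Complex.I * (p * ψ : ℝ) - (p * (1 - p) * ψ ^ 2 / 2 : ℝ)

lemma norm_exp_sub_taylor_two_le {z : ℂ} (hz : ‖z‖ ≤ 1) :
    ‖Complex.exp z - (1 + z + z ^ 2 / 2)‖ ≤ ‖z‖ ^ 3 := by
  have h := Complex.exp_bound hz (n := 3) (by norm_num)
  rw [show ∑ m ∈ Finset.range 3, z ^ m / (m.factorial : ℂ) = 1 + z + z ^ 2 / 2 by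
    simp [Finset.sum_range_succ, Nat.factorial]] at h
  exact h.trans (mul_le_of_le_one_right (by positivity) (by norm_num [Nat.factorial]))

lemma norm_I_mul_ofReal (x : ℝ) : ‖Complex.I * x‖ = |x| := by simp

lemma bernoulliCumulant_eq (p ψ : ℝ) : bernoulliCumulant p ψ =
    p * (Complex.I * ψ) + p * (1 - p) * (Complex.I * ψ) ^ 2 / 2 := by
  rw [bernoulliCumulant, mul_pow, Complex.I_sq]
  push_cast
  ring

lemma bernoulliChar_sub_exp_bernoulliCumulant (p ψ : ℝ) :
    bernoulliChar p ψ - Complex.exp (bernoulliCumulant p ψ) =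
      p * (Complex.exp (Complex.I * ψ) - (1 + Complex.I * ψ + (Complex.I * ψ) ^ 2 / 2)) -
      (Complex.exp (bernoulliCumulant p ψ) -
        (1 + bernoulliCumulant p ψ + bernoulliCumulant p ψ ^ 2 / 2)) -
      (p ^ 2 * (1 - p) / 2 : ℝ) * (Complex.I * ψ) ^ 3 -
      (p ^ 2 * (1 - p) ^ 2 / 8 : ℝ) * (Complex.I * ψ) ^ 4 := by
  rw [bernoulliChar, bernoulliCumulant_eq]
  push_cast
  ring

lemma bernoulli_variance_mul_sq_le {p : ℝ} (ψ : ℝ) (hp : 0 ≤ p) :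
    p * (1 - p) * ψ ^ 2 / 2 ≤ p * |ψ| ^ 2 / 2 := by
  rw [sq_abs]
  gcongr
  exact mul_le_of_le_one_right hp (by linarith)

section

variable {p : ℝ} (ψ : ℝ) (hp : 0 ≤ p) (hp1 : p ≤ 1)

include hp hp1

lemma norm_bernoulliChar_le_one : ‖bernoulliChar p ψ‖ ≤ 1 := by
  have hexp : ‖Complex.exp (Complex.I * ψ)‖ = 1 := by
    rw [mul_comm, Complex.norm_exp_ofReal_mul_I]
  calc ‖bernoulliChar p ψ‖ ≤ ‖((1 - p : ℝ) : ℂ)‖ + ‖(p : ℂ) * Complex.exp (Complex.I * ψ)‖ := by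
        rw [bernoulliChar, Complex.ofReal_sub, Complex.ofReal_one]
        exact norm_add_le _ _
    _ = 1 := by
        rw [norm_mul, hexp, Complex.norm_of_nonneg (sub_nonneg.2 hp1), Complex.norm_of_nonneg hp]
        ring

lemma norm_exp_bernoulliCumulant_le_one : ‖Complex.exp (bernoulliCumulant p ψ)‖ ≤ 1 := by
  have hvar : 0 ≤ p * (1 - p) * ψ ^ 2 / 2 := by
    have := sub_nonneg.2 hp1
    positivity
  rw [Complex.norm_exp, Real.exp_le_one_iff, bernoulliCumulant, Complex.sub_re, Complex.I_mul_re,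
    Complex.ofReal_im, Complex.ofReal_re]
  linarith

lemma norm_bernoulliCumulant_le : ‖bernoulliCumulant p ψ‖ ≤ p * |ψ| + p * |ψ| ^ 2 / 2 := by
  have hvar : 0 ≤ p * (1 - p) * ψ ^ 2 / 2 := by
    have := sub_nonneg.2 hp1
    positivity
  refine (norm_sub_le _ _).trans ?_
  rw [norm_I_mul_ofReal, abs_mul, abs_of_nonneg hp, Complex.norm_of_nonneg hvar]
  exact add_le_add_right (bernoulli_variance_mul_sq_le ψ hp) _

lemma norm_bernoulliChar_sub_exp_le_of_abs_le_half (hψ : |ψ| ≤ 1 / 2) :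
    ‖bernoulliChar p ψ - Complex.exp (bernoulliCumulant p ψ)‖ ≤ 25 * p * |ψ| ^ 3 := by
  have hq := sub_nonneg.2 hp1
  have hq1 : 1 - p ≤ 1 := by linarith
  have hp2 : p ^ 2 ≤ p := pow_le_of_le_one hp hp1 two_ne_zero
  have hcum : ‖bernoulliCumulant p ψ‖ ≤ 2 * p * |ψ| :=
    (norm_bernoulliCumulant_le ψ hp hp1).trans (by nlinarith [mul_nonneg hp (abs_nonneg ψ)])
  have hexp : ‖(p : ℂ) * (Complex.exp (Complex.I * ψ) -
      (1 + Complex.I * ψ + (Complex.I * ψ) ^ 2 / 2))‖ ≤ p * |ψ| ^ 3 := by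
    rw [norm_mul, Complex.norm_of_nonneg hp, ← norm_I_mul_ofReal]
    gcongr
    exact norm_exp_sub_taylor_two_le (by rw [norm_I_mul_ofReal]; linarith)
  have hexpCum : ‖Complex.exp (bernoulliCumulant p ψ) -
      (1 + bernoulliCumulant p ψ + bernoulliCumulant p ψ ^ 2 / 2)‖ ≤ 8 * p * |ψ| ^ 3 :=
    calc _ ≤ ‖bernoulliCumulant p ψ‖ ^ 3 :=
          norm_exp_sub_taylor_two_le (by nlinarith [abs_nonneg ψ])
      _ ≤ (2 * p * |ψ|) ^ 3 := by gcongr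
      _ = 8 * p ^ 3 * |ψ| ^ 3 := by ring
      _ ≤ 8 * p * |ψ| ^ 3 := by
          gcongr
          exact pow_le_of_le_one hp hp1 three_ne_zero
  have hcube : ‖((p ^ 2 * (1 - p) / 2 : ℝ) : ℂ) * (Complex.I * ψ) ^ 3‖ ≤ p * |ψ| ^ 3 := by
    rw [norm_mul, norm_pow, norm_I_mul_ofReal, Complex.norm_of_nonneg (by positivity)]
    gcongr
    nlinarith
  have hfour : ‖((p ^ 2 * (1 - p) ^ 2 / 8 : ℝ) : ℂ) * (Complex.I * ψ) ^ 4‖ ≤ p * |ψ| ^ 3 := by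
    rw [norm_mul, norm_pow, norm_I_mul_ofReal, Complex.norm_of_nonneg (by positivity)]
    refine mul_le_mul ?_ (pow_le_pow_of_le_one (abs_nonneg ψ) (by linarith) (by norm_num))
      (by positivity) hp
    nlinarith [pow_le_one₀ (n := 2) hq hq1]
  rw [bernoulliChar_sub_exp_bernoulliCumulant]
  refine (norm_sub_le_of_le (norm_sub_le_of_le (norm_sub_le_of_le hexp hexpCum) hcube)
    hfour).trans ?_
  linarith [mul_nonneg hp (pow_nonneg (abs_nonneg ψ) 3)]

lemma norm_exp_bernoulliCumulant_sub_one_le :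
    ‖Complex.exp (bernoulliCumulant p ψ) - 1‖ ≤ p * |ψ| + p * |ψ| ^ 2 / 2 := by
  set y := p * (1 - p) * ψ ^ 2 / 2 with hy
  have hy0 : 0 ≤ y := by
    have := sub_nonneg.2 hp1
    positivity
  have hphase : ‖Complex.exp (Complex.I * (p * ψ : ℝ)) - 1‖ ≤ p * |ψ| := by
    have h := Real.norm_exp_I_mul_ofReal_sub_one_le (x := p * ψ)
    rwa [Real.norm_eq_abs, abs_mul, abs_of_nonneg hp] at h
  have hdamp : ‖Complex.exp (Complex.I * (p * ψ : ℝ)) * (Real.exp (-y) - 1 : ℝ)‖ ≤ y := by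
    rw [norm_mul, mul_comm Complex.I, Complex.norm_exp_ofReal_mul_I, one_mul, Complex.norm_real,
      Real.norm_eq_abs, abs_of_nonpos (by simpa using hy0)]
    linarith [Real.add_one_le_exp (-y)]
  have hsplit : Complex.exp (bernoulliCumulant p ψ) - 1 =
      (Complex.exp (Complex.I * (p * ψ : ℝ)) - 1) +
        Complex.exp (Complex.I * (p * ψ : ℝ)) * (Real.exp (-y) - 1 : ℝ) := by
    rw [bernoulliCumulant, ← hy, sub_eq_add_neg (Complex.I * ((p * ψ : ℝ) : ℂ)), Complex.exp_add]
    push_cast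
    ring
  rw [hsplit]
  exact norm_add_le_of_le hphase (hdamp.trans (bernoulli_variance_mul_sq_le ψ hp))

lemma norm_bernoulliChar_sub_exp_le :
    ‖bernoulliChar p ψ - Complex.exp (bernoulliCumulant p ψ)‖ ≤ 25 * p * |ψ| ^ 3 := by
  rcases le_or_gt |ψ| (1 / 2) with hψ | hψ
  · exact norm_bernoulliChar_sub_exp_le_of_abs_le_half ψ hp hp1 hψ
  have hchar : ‖bernoulliChar p ψ - 1‖ ≤ p * |ψ| := by
    rw [show bernoulliChar p ψ - 1 = p * (Complex.exp (Complex.I * ψ) - 1) by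
      rw [bernoulliChar]; ring, norm_mul, Complex.norm_of_nonneg hp]
    gcongr
    exact Real.norm_exp_I_mul_ofReal_sub_one_le
  calc _ = ‖(bernoulliChar p ψ - 1) - (Complex.exp (bernoulliCumulant p ψ) - 1)‖ := by ring_nf
    _ ≤ p * |ψ| + (p * |ψ| + p * |ψ| ^ 2 / 2) :=
        norm_sub_le_of_le hchar (norm_exp_bernoulliCumulant_sub_one_le ψ hp hp1)
    _ = p * (2 * |ψ| + |ψ| ^ 2 / 2) := by ring
    _ ≤ p * (25 * |ψ| ^ 3) := by
        gcongr
        nlinarith [mul_pos (one_half_pos.trans hψ) (one_half_pos.trans hψ)]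
    _ = 25 * p * |ψ| ^ 3 := by ring

end

lemma one_add_exp_div_eq_bernoulliChar (y ψ : ℝ) :
    (1 + Complex.exp ((-y : ℝ) + Complex.I * ψ)) / (1 + Real.exp (-y) : ℝ) =
      bernoulliChar (fermi y) ψ := by
  have hne : ((1 + Real.exp (-y) : ℝ) : ℂ) ≠ 0 := by
    exact_mod_cast (by positivity : 1 + Real.exp (-y) ≠ 0)
  have hfermi : (fermi y : ℂ) * (1 + Real.exp (-y) : ℝ) = Real.exp (-y) := by
    rw [fermi, ← Real.sigmoid_mul_rexp_neg, Real.sigmoid_def]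
    norm_cast
    field_simp
  rw [div_eq_iff hne, bernoulliChar, Complex.exp_add, ← Complex.ofReal_exp]
  have hsum : ((1 + Real.exp (-y) : ℝ) : ℂ) = 1 + Real.exp (-y) := by push_cast; rfl
  linear_combination (1 - Complex.exp (Complex.I * ψ)) * hfermi - hsum

/-- The angle of a part of size `j` on the side that counts positively for the rank; on the other
side it is `partAngle r u (-v) j`. -/
def partAngle (r u v : ℝ) (j : ℕ) : ℝ := j * (u * r ^ 3) + v * r

lemma abs_partAngle_le {r : ℝ} (u v : ℝ) (hr : 0 ≤ r) (j : ℕ) :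
    |partAngle r u v j| ≤ r * ((|u| + |v|) * (1 + r ^ 2 * j)) := by
  have hsize : |j * (u * r ^ 3)| = |u| * (r * (r ^ 2 * j)) := by
    rw [abs_mul, abs_mul, Nat.abs_cast, abs_of_nonneg (by positivity : 0 ≤ r ^ 3)]
    ring
  have hrank : |v * r| = |v| * r := by rw [abs_mul, abs_of_nonneg hr]
  have hu : 0 ≤ |u| * r := by positivity
  have hv : 0 ≤ |v| * (r * (r ^ 2 * j)) := by positivity
  refine (abs_add_le _ _).trans ?_
  rw [hsize, hrank]
  linarith

/-- The characteristic function, in rescaled angles, of the tilted measure on the parts other than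
the central one; the parts on both sides are independent Bernoulli under this measure. -/
noncomputable def tiltedChar (N : ℕ) (r l u v : ℝ) : ℂ :=
  ∏ j ∈ Finset.Ioc 0 N, pairFactor (sizePoint r u) (rankPoint r l v) j / tiltFactor (r ^ 2) l j

/-- The second-order Taylor polynomial of the logarithm of `tiltedChar`. -/
noncomputable def tiltedCumulant (N : ℕ) (r l u v : ℝ) : ℂ := ∑ j ∈ Finset.Ioc 0 N,
  (bernoulliCumulant (fermi (r ^ 2 * j + l)) (partAngle r u (-v) j) +
    bernoulliCumulant (fermi (r ^ 2 * j - l)) (partAngle r u v j))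

lemma pairFactor_div_tiltFactor (r l u v : ℝ) (j : ℕ) :
    pairFactor (sizePoint r u) (rankPoint r l v) j / tiltFactor (r ^ 2) l j =
      bernoulliChar (fermi (r ^ 2 * j + l)) (partAngle r u (-v) j) *
        bernoulliChar (fermi (r ^ 2 * j - l)) (partAngle r u v j) := by
  rw [sizePoint, rankPoint, pairFactor_eq_mul, tiltFactor, ← one_add_exp_div_eq_bernoulliChar,
    ← one_add_exp_div_eq_bernoulliChar, div_mul_div_comm, ← Complex.ofReal_mul, partAngle,
    partAngle]
  ring_nf

lemma one_add_pow_three_mul_exp_neg_le {x : ℝ} (hx : 0 ≤ x) :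
    (1 + x) ^ 3 * Real.exp (-x) ≤ 216 * Real.exp (-(x / 2)) := by
  have hlin : 1 + x ≤ 6 * Real.exp (x / 6) := by linarith [Real.add_one_le_exp (x / 6)]
  calc (1 + x) ^ 3 * Real.exp (-x) ≤ (6 * Real.exp (x / 6)) ^ 3 * Real.exp (-x) := by gcongr
    _ = 216 * (Real.exp (x / 6) ^ 3 * Real.exp (-x)) := by ring
    _ = 216 * Real.exp (-(x / 2)) := by
        rw [← Real.exp_nat_mul, ← Real.exp_add]
        ring_nf

lemma sum_one_add_pow_three_mul_exp_neg_le {t : ℝ} (ht : 0 < t) (ht1 : t ≤ 1) (N : ℕ) :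
    ∑ j ∈ Finset.Ioc 0 N, (1 + t * j) ^ 3 * Real.exp (-(t * j)) ≤ 864 / t := by
  calc _ ≤ ∑ j ∈ Finset.Ioc 0 N, 216 * Real.exp (-(t / 2 * j)) :=
        Finset.sum_le_sum fun j _ ↦ (one_add_pow_three_mul_exp_neg_le (by positivity)).trans_eq
          (by ring_nf)
    _ ≤ 216 * (2 / (t / 2)) := by
        rw [← Finset.mul_sum]
        gcongr
        exact sum_Ioc_exp_neg_mul_le (half_pos ht) (by linarith) N
    _ = 864 / t := by field_simp; norm_num

lemma sum_le_of_le_mul_pow_three_mul_exp_neg {f : ℕ → ℝ} {t C : ℝ} (ht : 0 < t) (ht1 : t ≤ 1)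
    (hf : ∀ j : ℕ, f j ≤ C * ((1 + t * j) ^ 3 * Real.exp (-(t * j)))) (hC : 0 ≤ C) (N : ℕ) :
    ∑ j ∈ Finset.Ioc 0 N, f j ≤ C * (864 / t) := by
  refine (Finset.sum_le_sum fun j _ ↦ hf j).trans ?_
  rw [← Finset.mul_sum]
  gcongr
  exact sum_one_add_pow_three_mul_exp_neg_le ht ht1 N

lemma norm_mul_sub_mul_le {R : Type*} [NormedRing R] {a b a' b' : R} (hb : ‖b‖ ≤ 1)
    (ha' : ‖a'‖ ≤ 1) : ‖a * b - a' * b'‖ ≤ ‖a - a'‖ + ‖b - b'‖ := by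
  calc ‖a * b - a' * b'‖ = ‖(a - a') * b + a' * (b - b')‖ := by noncomm_ring
    _ ≤ ‖a - a'‖ * ‖b‖ + ‖a'‖ * ‖b - b'‖ :=
        (norm_add_le _ _).trans (add_le_add (norm_mul_le _ _) (norm_mul_le _ _))
    _ ≤ ‖a - a'‖ * 1 + 1 * ‖b - b'‖ := by gcongr
    _ = ‖a - a'‖ + ‖b - b'‖ := by rw [mul_one, one_mul]

section

variable {r l : ℝ} (hr : 0 < r) (hr1 : r ≤ 1) (hl : |l| ≤ 1 / 2)

include hl in
lemma fermi_add_le (x : ℝ) : fermi (x + l) ≤ 2 * Real.exp (-x) :=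
  (fermi_le_exp_neg _).trans (exp_neg_add_le x hl)

include hr hl in
lemma norm_bernoulliChar_partAngle_sub_le (u v : ℝ) (j : ℕ) :
    ‖bernoulliChar (fermi (r ^ 2 * j + l)) (partAngle r u v j) -
        Complex.exp (bernoulliCumulant (fermi (r ^ 2 * j + l)) (partAngle r u v j))‖ ≤
      50 * (|u| + |v|) ^ 3 * r ^ 3 * ((1 + r ^ 2 * j) ^ 3 * Real.exp (-(r ^ 2 * j))) := by
  refine (norm_bernoulliChar_sub_exp_le _ (fermi_pos _).le (fermi_lt_one _).le).trans ?_
  calc _ ≤ 25 * (2 * Real.exp (-(r ^ 2 * j))) * (r * ((|u| + |v|) * (1 + r ^ 2 * j))) ^ 3 := by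
        gcongr
        exacts [fermi_add_le hl _, abs_partAngle_le u v hr.le j]
    _ = _ := by ring

include hr hr1 hl in
lemma norm_tiltedChar_sub_exp_le (N : ℕ) (u v : ℝ) :
    ‖tiltedChar N r l u v - Complex.exp (tiltedCumulant N r l u v)‖ ≤
      86400 * (|u| + |v|) ^ 3 * r := by
  have hchar (x ψ : ℝ) : ‖bernoulliChar (fermi x) ψ‖ ≤ 1 :=
    norm_bernoulliChar_le_one ψ (fermi_pos x).le (fermi_lt_one x).le
  have hexp (x ψ : ℝ) : ‖Complex.exp (bernoulliCumulant (fermi x) ψ)‖ ≤ 1 :=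
    norm_exp_bernoulliCumulant_le_one ψ (fermi_pos x).le (fermi_lt_one x).le
  simp_rw [tiltedChar, tiltedCumulant, Complex.exp_sum, pairFactor_div_tiltFactor, Complex.exp_add]
  refine (norm_prod_sub_prod_le _ (fun j _ ↦ norm_mul_le_of_le (hchar _ _) (hchar _ _) |>.trans_eq
    (one_mul 1)) fun j _ ↦ norm_mul_le_of_le (hexp _ _) (hexp _ _) |>.trans_eq (one_mul 1)).trans ?_
  refine (sum_le_of_le_mul_pow_three_mul_exp_neg (C := 100 * (|u| + |v|) ^ 3 * r ^ 3)
    (pow_pos hr 2) (pow_le_one₀ hr.le hr1) (fun j ↦ ?_) (by positivity) N).trans_eq ?_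
  · have hleft := norm_bernoulliChar_partAngle_sub_le hr hl u (-v) j
    have hright := norm_bernoulliChar_partAngle_sub_le hr (by rwa [abs_neg]) u v j (l := -l)
    rw [abs_neg] at hleft
    rw [← sub_eq_add_neg] at hright
    refine (norm_mul_sub_mul_le (hchar _ _) (hexp _ _)).trans ?_
    linarith
  · field_simp
    ring

end

/-- The mean of the size under the tilted measure. -/
noncomputable def meanSize (N : ℕ) (t l : ℝ) : ℝ :=
  ∑ j ∈ Finset.Ioc 0 N, j * (fermi (t * j - l) + fermi (t * j + l))

/-- The mean of the rank under the tilted measure. -/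
noncomputable def meanRank (N : ℕ) (t l : ℝ) : ℝ :=
  ∑ j ∈ Finset.Ioc 0 N, (fermi (t * j - l) - fermi (t * j + l))

/-- The coefficient of `I` in the linear part of the exponent at the saddle point. -/
noncomputable def meanError (N : ℕ) (m r l u v : ℝ) : ℝ :=
  u * r ^ 3 * (meanSize N (r ^ 2) l - N) + v * r * (meanRank N (r ^ 2) l - m)

/-- The variance of `(u * r ^ 3) * size + (v * r) * rank` under the tilted measure. -/
noncomputable def angleVariance (N : ℕ) (r l u v : ℝ) : ℝ := ∑ j ∈ Finset.Ioc 0 N,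
  (fermiVar (r ^ 2 * j + l) * partAngle r u (-v) j ^ 2 +
    fermiVar (r ^ 2 * j - l) * partAngle r u v j ^ 2)

lemma tiltedCumulant_eq (N : ℕ) (r l u v : ℝ) : tiltedCumulant N r l u v =
    Complex.I * (u * r ^ 3 * meanSize N (r ^ 2) l + v * r * meanRank N (r ^ 2) l : ℝ) -
      (angleVariance N r l u v / 2 : ℝ) := by
  simp only [tiltedCumulant, bernoulliCumulant, meanSize, meanRank, angleVariance, partAngle,
    fermiVar, Finset.mul_sum, Finset.sum_div, ← Finset.sum_add_distrib, Complex.ofReal_sum,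
    ← Finset.sum_sub_distrib]
  refine Finset.sum_congr rfl fun j _ ↦ ?_
  push_cast
  ring

lemma phase_mul_exp_tiltedCumulant (N : ℕ) (m r l u v : ℝ) :
    phase N m r u v * Complex.exp (tiltedCumulant N r l u v) =
      Complex.exp (Complex.I * meanError N m r l u v - (angleVariance N r l u v / 2 : ℝ)) := by
  rw [phase, ← Complex.exp_add, tiltedCumulant_eq, meanError]
  push_cast
  ring_nf

section

variable {N : ℕ} {t l m : ℝ} (ht : 0 < t) (ht1 : t ≤ 1)

include ht ht1

lemma abs_meanSize_sub_meanSize_zero_le (hl : |l| ≤ 1 / 2) :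
    |meanSize N t l - meanSize N t 0| ≤ 3456 * (l ^ 2 / t ^ 2) := by
  rw [meanSize, meanSize, ← Finset.sum_sub_distrib]
  refine (Finset.abs_sum_le_sum_abs _ _).trans ((sum_le_of_le_mul_pow_three_mul_exp_neg
    (C := 4 * l ^ 2 / t) ht ht1 (fun j ↦ ?_) (by positivity) N).trans_eq (by field_simp; ring))
  have hj : (j : ℝ) ≤ (1 + t * j) ^ 3 / t := by
    rw [le_div_iff₀ ht]
    nlinarith [pow_le_pow_right₀ (by nlinarith [mul_nonneg ht.le j.cast_nonneg] :
      1 ≤ 1 + t * (j : ℝ)) (by norm_num : 1 ≤ 3)]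
  calc _ = j * |fermi (t * j - l) + fermi (t * j + l) - 2 * fermi (t * j)| := by
        rw [← Nat.abs_cast, ← abs_mul, Nat.abs_cast, sub_zero, add_zero]
        ring_nf
    _ ≤ (1 + t * j) ^ 3 / t * (4 * Real.exp (-(t * j)) * |l| ^ 2) := by
        gcongr
        exact abs_fermi_symm_diff_le _ hl
    _ = _ := by rw [sq_abs]; ring

lemma abs_meanSize_zero_sub_le (hN : 6 * N * t ^ 2 = π ^ 2) :
    |meanSize N t 0 - N| ≤ 48 / t := by
  have hN1 : 1 ≤ t ^ 2 * N := by nlinarith [Real.pi_gt_three]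
  have heq : meanSize N t 0 - N =
      2 / t ^ 2 * (t * ∑ j ∈ Finset.Ioc 0 N, (t * j) * fermi (t * j) - π ^ 2 / 12) := by
    have hsum : meanSize N t 0 = 2 / t ^ 2 * (t * ∑ j ∈ Finset.Ioc 0 N, t * j * fermi (t * j)) := by
      rw [meanSize, Finset.mul_sum, Finset.mul_sum]
      refine Finset.sum_congr rfl fun j _ ↦ ?_
      rw [sub_zero, add_zero]
      field_simp
      ring
    rw [mul_sub, ← hsum, ← hN]
    field_simp
    ring
  rw [heq, abs_mul, abs_of_pos (by positivity)]
  calc _ ≤ 2 / t ^ 2 * (24 * t) := by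
        gcongr
        exact abs_mul_sum_mul_fermi_sub_le ht ht1 hN1
    _ = 48 / t := by field_simp; norm_num

lemma abs_meanRank_sub_le (hl : |l| ≤ 1 / 2) (hN : 1 ≤ t ^ 2 * N) (hm : l = t * m) :
    |meanRank N t l - m| ≤ 24 * (|l| ^ 3 / t) + 16 * |l| := by
  set S := ∑ j ∈ Finset.Ioc 0 N, fermiVar (t * j)
  have htaylor : |meanRank N t l - 2 * l * S| ≤ 24 * (|l| ^ 3 / t) := by
    rw [meanRank, Finset.mul_sum, ← Finset.sum_sub_distrib]
    calc _ ≤ ∑ j ∈ Finset.Ioc 0 N, 12 * Real.exp (-(t * j)) * |l| ^ 3 :=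
          (Finset.abs_sum_le_sum_abs _ _).trans
            (Finset.sum_le_sum fun j _ ↦ abs_fermi_sub_fermi_sub_le _ hl)
      _ = 12 * |l| ^ 3 * ∑ j ∈ Finset.Ioc 0 N, Real.exp (-(t * j)) := by
          rw [Finset.mul_sum]
          exact Finset.sum_congr rfl fun j _ ↦ by ring
      _ ≤ 12 * |l| ^ 3 * (2 / t) := by
          gcongr
          exact sum_Ioc_exp_neg_mul_le ht ht1 N
      _ = 24 * (|l| ^ 3 / t) := by ring
  have hriemann : |2 * l * S - m| ≤ 16 * |l| := by
    have heq : 2 * l * S - m = 2 * l / t * (t * S - 1 / 2) := by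
      rw [hm]
      field_simp
    rw [heq, abs_mul, abs_div, abs_mul, abs_of_pos ht, abs_two]
    calc _ ≤ 2 * |l| / t * (8 * t) := by
          gcongr
          exact abs_mul_sum_fermiVar_sub_le ht ht1 hN
      _ = 16 * |l| := by field_simp; ring
  exact (abs_sub_le _ (2 * l * S) _).trans (add_le_add htaylor hriemann)

end

section

variable {N : ℕ} {r l m : ℝ} (u v : ℝ) (hr : 0 < r) (hr1 : r ≤ 1) (hl : |l| ≤ 1 / 2)

include hr hr1 hl

lemma abs_meanError_le (hN : 6 * N * r ^ 4 = π ^ 2) (hm : l = r ^ 2 * m) :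
    |meanError N m r l u v| ≤ |u| * (3456 * (l ^ 2 / r) + 48 * r) +
      |v| * (24 * (|l| ^ 3 / r) + 16 * r * |l|) := by
  have ht : 0 < r ^ 2 := by positivity
  have ht1 : r ^ 2 ≤ 1 := pow_le_one₀ hr.le hr1
  have hN' : 6 * N * (r ^ 2) ^ 2 = π ^ 2 := by rw [← hN]; ring
  have hN1 : 1 ≤ (r ^ 2) ^ 2 * N := by nlinarith [Real.pi_gt_three]
  have hsize := (abs_sub_le (meanSize N (r ^ 2) l) (meanSize N (r ^ 2) 0) N).trans
    (add_le_add (abs_meanSize_sub_meanSize_zero_le ht ht1 hl)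
      (abs_meanSize_zero_sub_le ht ht1 hN'))
  refine (abs_add_le _ _).trans ?_
  rw [abs_mul, abs_mul (v * r), abs_mul, abs_mul v, abs_of_pos hr, abs_of_pos (pow_pos hr 3)]
  calc _ ≤ |u| * r ^ 3 * (3456 * (l ^ 2 / (r ^ 2) ^ 2) + 48 / r ^ 2) +
        |v| * r * (24 * (|l| ^ 3 / r ^ 2) + 16 * |l|) := by
        gcongr
        exact abs_meanRank_sub_le ht ht1 hl hN1 hm
    _ = _ := by field_simp

omit hr1 in
lemma abs_fermiVar_sub_mul_partAngle_sq_le (j : ℕ) :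
    |(fermiVar (r ^ 2 * j + l) - fermiVar (r ^ 2 * j)) * partAngle r u v j ^ 2| ≤
      2 * |l| * r ^ 2 * (|u| + |v|) ^ 2 *
        ((1 + r ^ 2 * j) ^ 3 * Real.exp (-(r ^ 2 * j))) := by
  have hone : 1 ≤ 1 + r ^ 2 * (j : ℝ) := le_add_of_nonneg_right (by positivity)
  rw [abs_mul, abs_pow]
  calc _ ≤ 2 * Real.exp (-(r ^ 2 * j)) * |l| * (r * ((|u| + |v|) * (1 + r ^ 2 * j))) ^ 2 := by
        gcongr
        exacts [abs_fermiVar_add_sub_le _ hl, abs_partAngle_le u v hr.le j]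
    _ = 2 * |l| * r ^ 2 * (|u| + |v|) ^ 2 *
          ((1 + r ^ 2 * j) ^ 2 * Real.exp (-(r ^ 2 * j))) := by ring
    _ ≤ _ := by
        gcongr
        norm_num

lemma abs_angleVariance_sub_angleVariance_zero_le :
    |angleVariance N r l u v - angleVariance N r 0 u v| ≤ 3456 * (|u| + |v|) ^ 2 * |l| := by
  rw [angleVariance, angleVariance, ← Finset.sum_sub_distrib]
  refine (Finset.abs_sum_le_sum_abs _ _).trans ((sum_le_of_le_mul_pow_three_mul_exp_neg
    (C := 4 * |l| * r ^ 2 * (|u| + |v|) ^ 2) (pow_pos hr 2) (pow_le_one₀ hr.le hr1)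
    (fun j ↦ ?_) (by positivity) N).trans_eq (by field_simp; ring))
  have hleft := abs_fermiVar_sub_mul_partAngle_sq_le u (-v) hr hl j
  have hright := abs_fermiVar_sub_mul_partAngle_sq_le u v hr (by rwa [abs_neg]) j (l := -l)
  rw [abs_neg] at hleft
  rw [abs_neg, ← sub_eq_add_neg] at hright
  rw [add_zero, sub_zero, add_sub_add_comm, ← sub_mul, ← sub_mul]
  refine (abs_add_le _ _).trans ((add_le_add hleft hright).trans_eq ?_)
  ring

end

lemma angleVariance_zero (N : ℕ) (r u v : ℝ) : angleVariance N r 0 u v =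
    2 * u ^ 2 * (r ^ 2 * ∑ j ∈ Finset.Ioc 0 N, (r ^ 2 * j) ^ 2 * fermiVar (r ^ 2 * j)) +
      2 * v ^ 2 * (r ^ 2 * ∑ j ∈ Finset.Ioc 0 N, fermiVar (r ^ 2 * j)) := by
  simp only [angleVariance, partAngle, Finset.mul_sum, ← Finset.sum_add_distrib, add_zero,
    sub_zero]
  exact Finset.sum_congr rfl fun j _ ↦ by ring

lemma abs_angleVariance_sub_le {N : ℕ} {r l : ℝ} (u v : ℝ) (hr : 0 < r) (hr1 : r ≤ 1)
    (hl : |l| ≤ 1 / 2) (hN : 1 ≤ (r ^ 2) ^ 2 * N) :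
    |angleVariance N r l u v - (2 * fermiSecondMoment * u ^ 2 + v ^ 2)| ≤
      3456 * (|u| + |v|) ^ 2 * |l| + (192 * u ^ 2 + 16 * v ^ 2) * r ^ 2 := by
  have ht : 0 < r ^ 2 := by positivity
  have ht1 : r ^ 2 ≤ 1 := pow_le_one₀ hr.le hr1
  have hzero : |angleVariance N r 0 u v - (2 * fermiSecondMoment * u ^ 2 + v ^ 2)| ≤
      (192 * u ^ 2 + 16 * v ^ 2) * r ^ 2 := by
    rw [angleVariance_zero, show ∀ a b : ℝ, 2 * u ^ 2 * a + 2 * v ^ 2 * b -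
      (2 * fermiSecondMoment * u ^ 2 + v ^ 2) = 2 * u ^ 2 * (a - fermiSecondMoment) +
        2 * v ^ 2 * (b - 1 / 2) by intros; ring]
    refine (abs_add_le _ _).trans ?_
    rw [abs_mul (2 * u ^ 2), abs_mul (2 * v ^ 2), abs_of_nonneg (by positivity : 0 ≤ 2 * u ^ 2),
      abs_of_nonneg (by positivity : 0 ≤ 2 * v ^ 2)]
    calc _ ≤ 2 * u ^ 2 * (96 * r ^ 2) + 2 * v ^ 2 * (8 * r ^ 2) := by
          gcongr
          exacts [abs_mul_sum_sq_mul_fermiVar_sub_le ht ht1 hN,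
            abs_mul_sum_fermiVar_sub_le ht ht1 hN]
      _ = _ := by ring
  exact (abs_sub_le _ (angleVariance N r 0 u v) _).trans
    (add_le_add (abs_angleVariance_sub_angleVariance_zero_le u v hr hr1 hl) hzero)

/-! ### The limit of the integrals -/

section SaddlePoint

/-- The radius `(π ^ 2 / (6 * N)) ^ (1 / 4)` of the saddle point: `exp (-r ^ 2)` is the saddle of
the generating function in the size variable. -/
noncomputable def saddleRadius (N : ℕ) : ℝ :=
  (π ^ 2 / 6) ^ ((1 : ℝ) / 4) * (N : ℝ) ^ (-((1 : ℝ) / 4))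

/-- The saddle point in the (logarithmic) rank variable for compositions of `N` of rank `m`. -/
noncomputable def saddleTilt (N : ℕ) (m : ℝ) : ℝ := saddleRadius N ^ 2 * m

lemma saddleRadius_pos {N : ℕ} (hN : 0 < N) : 0 < saddleRadius N := by
  have : (0 : ℝ) < N := by exact_mod_cast hN
  unfold saddleRadius
  positivity

lemma tendsto_saddleRadius : Tendsto saddleRadius atTop (nhds 0) := by
  have h := (tendsto_rpow_neg_atTop (by norm_num : (0 : ℝ) < 1 / 4)).comp
    (tendsto_natCast_atTop_atTop (R := ℝ))
  exact mul_zero ((π ^ 2 / 6) ^ ((1 : ℝ) / 4)) ▸ h.const_mul _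

lemma saddleRadius_pow_four {N : ℕ} (hN : 0 < N) : 6 * N * saddleRadius N ^ 4 = π ^ 2 := by
  have hN' : (0 : ℝ) < N := by exact_mod_cast hN
  have hconst : ((π ^ 2 / 6) ^ ((1 : ℝ) / 4)) ^ 4 = π ^ 2 / 6 := by
    rw [← Real.rpow_mul_natCast (by positivity)]
    norm_num
  have hpow : ((N : ℝ) ^ (-((1 : ℝ) / 4))) ^ 4 = (N : ℝ)⁻¹ := by
    rw [← Real.rpow_mul_natCast hN'.le, ← Real.rpow_neg_one]
    norm_num
  rw [saddleRadius, mul_pow, hconst, hpow]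
  field_simp

lemma one_le_saddleRadius_pow_four_mul {N : ℕ} (hN : 0 < N) :
    1 ≤ (saddleRadius N ^ 2) ^ 2 * N := by
  nlinarith [saddleRadius_pow_four hN, Real.pi_gt_three]

lemma one_le_saddleRadius_sq_mul {N : ℕ} (hN : 0 < N) (h1 : saddleRadius N ≤ 1) :
    1 ≤ saddleRadius N ^ 2 * N := by
  refine (one_le_saddleRadius_pow_four_mul hN).trans ?_
  gcongr
  exact pow_le_of_le_one (saddleRadius_pos hN).le h1 two_ne_zero

lemma saddleTilt_sq_div_saddleRadius {N : ℕ} (hN : 0 < N) (m : ℝ) :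
    saddleTilt N m ^ 2 / saddleRadius N =
      ((π ^ 2 / 6) ^ ((1 : ℝ) / 4)) ^ 3 * (m / (N : ℝ) ^ ((3 : ℝ) / 8)) ^ 2 := by
  have hN' : (0 : ℝ) < N := by exact_mod_cast hN
  have hr := saddleRadius_pos hN
  have hpow : ((N : ℝ) ^ (-((1 : ℝ) / 4))) ^ 3 = (((N : ℝ) ^ ((3 : ℝ) / 8)) ^ 2)⁻¹ := by
    rw [← Real.rpow_mul_natCast hN'.le, ← Real.rpow_mul_natCast hN'.le, ← Real.rpow_neg hN'.le]
    norm_num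
  calc saddleTilt N m ^ 2 / saddleRadius N = saddleRadius N ^ 3 * m ^ 2 := by
        rw [saddleTilt]; field_simp
    _ = _ := by rw [saddleRadius, mul_pow, hpow]; ring

lemma tendsto_abs_mul_saddleRadius_pow (u : ℝ) {k : ℕ} (hk : k ≠ 0) :
    Tendsto (fun N ↦ |u * saddleRadius N ^ k|) atTop (nhds 0) := by
  simpa [hk] using ((tendsto_saddleRadius.pow k).const_mul u).abs

lemma eventually_mem_angleRange (u : ℝ) {k : ℕ} (hk : k ≠ 0) :
    ∀ᶠ N in atTop, u ∈ angleRange (saddleRadius N ^ k) := by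
  filter_upwards [(tendsto_abs_mul_saddleRadius_pow u hk).eventually_lt_const Real.pi_pos,
    eventually_gt_atTop 0] with N hu hN
  exact mem_angleRange_of_abs_mul_lt_pi (pow_pos (saddleRadius_pos hN) k) hu

lemma tendsto_sizePoint (u : ℝ) :
    Tendsto (fun N ↦ sizePoint (saddleRadius N) u) atTop (nhds 0) := by
  have hcont : Continuous fun r ↦ sizePoint r u := by unfold sizePoint; fun_prop
  have h := (hcont.tendsto 0).comp tendsto_saddleRadius
  rwa [show sizePoint 0 u = 0 by simp [sizePoint]] at h

/-- The limit of `phase * tiltedChar` in the rescaled angles `u` (size) and `v` (rank). -/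
noncomputable def gaussianLimit (u v : ℝ) : ℝ :=
  Real.exp (-((2 * fermiSecondMoment * u ^ 2 + v ^ 2) / 2))

lemma centralTerm_mul_prod_pairFactor {N c : ℕ} (hc : c ≤ N) (r l u v : ℝ) :
    centralTerm N r l u v c * ∏ j ∈ Finset.Ioc 0 c, pairFactor (sizePoint r u) (rankPoint r l v) j =
      Complex.exp (c * sizePoint r u) * tiltedChar N r l u v := by
  rw [centralTerm, tiltedChar, if_pos hc, Finset.prod_div_distrib, tiltProd, Complex.ofReal_prod,
    ← Finset.prod_Ioc_consecutive (pairFactor _ _) (Nat.zero_le c) hc]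
  ring

lemma saddleIntegrand_eq_tsum (N : ℕ) (m r l u v : ℝ) :
    saddleIntegrand N m r l u v = ∑' c, phase N m r u v * centralTerm N r l u v c := by
  rw [saddleIntegrand, mul_div_assoc, genFun_div_tiltProd, tsum_mul_left]

/-- The constant in the integrable bound `norm_saddleIntegrand_le`. -/
noncomputable def saddleConst : ℝ := (∑' c, centralWeight c) * (2 * 10 ^ 10)

lemma saddleConst_nonneg : 0 ≤ saddleConst :=
  mul_nonneg (tsum_nonneg centralWeight_nonneg) (by norm_num)

lemma norm_saddleIntegrand_le {N : ℕ} {r l u v : ℝ} (m : ℝ) (hr : 0 < r) (hr4 : r ≤ 1 / 4)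
    (hu : |u * r ^ 3| ≤ π) (hv : |v * r| ≤ π) (hl : |l| ≤ 1 / 2) (hN : 1 ≤ r ^ 2 * N) :
    ‖saddleIntegrand N m r l u v‖ ≤ saddleConst * ((1 + u ^ 2)⁻¹ * (1 + v ^ 2)⁻¹) := by
  rw [saddleIntegrand_eq_tsum, saddleConst, mul_assoc, ← tsum_mul_right]
  refine tsum_of_norm_bounded (summable_centralWeight.mul_right _).hasSum fun c ↦ ?_
  rw [norm_mul, norm_phase, one_mul]
  exact norm_centralTerm_le c hr hr4 hu hv hl hN

variable {m : ℕ → ℝ} (hm : Tendsto (fun N ↦ m N / (N : ℝ) ^ ((3 : ℝ) / 8)) atTop (nhds 0))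
include hm

lemma tendsto_saddleTilt_sq_div :
    Tendsto (fun N ↦ saddleTilt N (m N) ^ 2 / saddleRadius N) atTop (nhds 0) := by
  have h := (hm.pow 2).const_mul (((π ^ 2 / 6) ^ ((1 : ℝ) / 4)) ^ 3)
  rw [zero_pow two_ne_zero, mul_zero] at h
  refine h.congr' ?_
  filter_upwards [eventually_gt_atTop 0] with N hN
  exact (saddleTilt_sq_div_saddleRadius hN (m N)).symm

lemma tendsto_saddleTilt : Tendsto (fun N ↦ saddleTilt N (m N)) atTop (nhds 0) := by
  have h := (tendsto_saddleTilt_sq_div hm).mul tendsto_saddleRadius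
  rw [zero_mul] at h
  have hsq : Tendsto (fun N ↦ saddleTilt N (m N) ^ 2) atTop (nhds 0) := by
    refine h.congr' ?_
    filter_upwards [eventually_gt_atTop 0] with N hN
    exact div_mul_cancel₀ _ (saddleRadius_pos hN).ne'
  rw [tendsto_zero_iff_abs_tendsto_zero]
  simpa [Function.comp_def, Real.sqrt_sq_eq_abs] using hsq.sqrt

lemma eventually_saddle_bounds : ∀ᶠ N : ℕ in atTop,
    0 < N ∧ saddleRadius N ≤ 1 / 4 ∧ |saddleTilt N (m N)| ≤ 1 / 2 := by
  have htilt := (tendsto_saddleTilt hm).abs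
  rw [abs_zero] at htilt
  filter_upwards [eventually_gt_atTop 0,
    tendsto_saddleRadius.eventually_lt_const (by norm_num : (0 : ℝ) < 1 / 4),
    htilt.eventually_lt_const (by norm_num : (0 : ℝ) < 1 / 2)] with N hN hr hl
  exact ⟨hN, hr.le, hl.le⟩

lemma tendsto_rankPoint (v : ℝ) :
    Tendsto (fun N ↦ rankPoint (saddleRadius N) (saddleTilt N (m N)) v) atTop (nhds 0) := by
  have hcont : Continuous fun p : ℝ × ℝ ↦ rankPoint p.1 p.2 v := by unfold rankPoint; fun_prop
  have h := (hcont.tendsto (0, 0)).comp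
    (tendsto_saddleRadius.prodMk_nhds (tendsto_saddleTilt hm))
  rwa [show rankPoint (0, 0).1 ((0, 0) : ℝ × ℝ).2 v = 0 by simp [rankPoint]] at h

lemma tendsto_pairFactor (u v : ℝ) (j : ℕ) :
    Tendsto (fun N ↦ pairFactor (sizePoint (saddleRadius N) u)
      (rankPoint (saddleRadius N) (saddleTilt N (m N)) v) j) atTop (nhds 4) := by
  have hcont : Continuous fun p : ℂ × ℂ ↦ pairFactor p.1 p.2 j := by unfold pairFactor; fun_prop
  have h := (hcont.tendsto (0, 0)).comp
    ((tendsto_sizePoint u).prodMk_nhds (tendsto_rankPoint hm v))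
  rwa [show pairFactor (0, 0).1 ((0, 0) : ℂ × ℂ).2 j = 4 by norm_num [pairFactor]] at h

lemma tendsto_meanError (u v : ℝ) :
    Tendsto (fun N ↦ meanError N (m N) (saddleRadius N) (saddleTilt N (m N)) u v) atTop
      (nhds 0) := by
  have hsq := tendsto_saddleTilt_sq_div hm
  have htilt := (tendsto_saddleTilt hm).abs
  have hcube : Tendsto (fun N ↦ |saddleTilt N (m N)| ^ 3 / saddleRadius N) atTop (nhds 0) := by
    have h := hsq.mul htilt
    rw [zero_mul] at h
    exact h.congr fun N ↦ by rw [← sq_abs]; ring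
  have hbound := (((hsq.const_mul 3456).add (tendsto_saddleRadius.const_mul 48)).const_mul |u|).add
    (((hcube.const_mul 24).add ((tendsto_saddleRadius.const_mul 16).mul htilt)).const_mul |v|)
  simp only [mul_zero, add_zero, zero_mul] at hbound
  refine squeeze_zero_norm' ?_ hbound
  filter_upwards [eventually_saddle_bounds hm] with N ⟨hN, hr, hl⟩
  exact abs_meanError_le u v (saddleRadius_pos hN) (by linarith) hl (saddleRadius_pow_four hN) rfl

lemma tendsto_angleVariance (u v : ℝ) :
    Tendsto (fun N ↦ angleVariance N (saddleRadius N) (saddleTilt N (m N)) u v) atTop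
      (nhds (2 * fermiSecondMoment * u ^ 2 + v ^ 2)) := by
  have hbound := ((tendsto_saddleTilt hm).abs.const_mul (3456 * (|u| + |v|) ^ 2)).add
    ((tendsto_saddleRadius.pow 2).const_mul (192 * u ^ 2 + 16 * v ^ 2))
  rw [abs_zero, zero_pow two_ne_zero, mul_zero, mul_zero, add_zero] at hbound
  rw [tendsto_iff_norm_sub_tendsto_zero]
  refine squeeze_zero' (Eventually.of_forall fun N ↦ norm_nonneg _) ?_ hbound
  filter_upwards [eventually_saddle_bounds hm] with N ⟨hN, hr, hl⟩
  exact abs_angleVariance_sub_le u v (saddleRadius_pos hN) (by linarith) hl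
    (one_le_saddleRadius_pow_four_mul hN)

lemma tendsto_phase_mul_tiltedChar (u v : ℝ) :
    Tendsto (fun N ↦ phase N (m N) (saddleRadius N) u v *
      tiltedChar N (saddleRadius N) (saddleTilt N (m N)) u v) atTop
      (nhds (gaussianLimit u v : ℂ)) := by
  have hexp : Tendsto (fun N ↦ phase N (m N) (saddleRadius N) u v *
      Complex.exp (tiltedCumulant N (saddleRadius N) (saddleTilt N (m N)) u v)) atTop
      (nhds (gaussianLimit u v : ℂ)) := by
    simp_rw [phase_mul_exp_tiltedCumulant]
    have h := (((tendsto_meanError hm u v).ofReal.const_mul Complex.I).sub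
      ((tendsto_angleVariance hm u v).div_const 2).ofReal).cexp
    rwa [Complex.ofReal_zero, mul_zero, zero_sub, ← Complex.ofReal_neg, ← Complex.ofReal_exp] at h
  have hdiff : Tendsto (fun N ↦ phase N (m N) (saddleRadius N) u v *
      tiltedChar N (saddleRadius N) (saddleTilt N (m N)) u v - phase N (m N) (saddleRadius N) u v *
      Complex.exp (tiltedCumulant N (saddleRadius N) (saddleTilt N (m N)) u v)) atTop (nhds 0) := by
    have hbound := tendsto_saddleRadius.const_mul (86400 * (|u| + |v|) ^ 3)
    rw [mul_zero] at hbound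
    refine squeeze_zero_norm' ?_ hbound
    filter_upwards [eventually_saddle_bounds hm] with N ⟨hN, hr, hl⟩
    rw [← mul_sub, norm_mul, norm_phase, one_mul]
    exact norm_tiltedChar_sub_exp_le (saddleRadius_pos hN) (by linarith) hl N u v
  simpa only [sub_add_cancel, zero_add] using hdiff.add hexp

lemma tendsto_phase_mul_centralTerm (u v : ℝ) (c : ℕ) :
    Tendsto (fun N ↦ phase N (m N) (saddleRadius N) u v *
      centralTerm N (saddleRadius N) (saddleTilt N (m N)) u v c) atTop
      (nhds ((gaussianLimit u v : ℂ) * (1 / 4) ^ c)) := by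
  have hprod := tendsto_finsetProd (Finset.Ioc 0 c) fun j _ ↦ tendsto_pairFactor hm u v j
  rw [Finset.prod_const, Nat.card_Ioc, Nat.sub_zero] at hprod
  have h4 : (4 : ℂ) ^ c ≠ 0 := pow_ne_zero _ (by norm_num)
  have hexp := ((tendsto_sizePoint u).const_mul (c : ℂ)).cexp
  rw [mul_zero, Complex.exp_zero] at hexp
  have h := ((tendsto_phase_mul_tiltedChar hm u v).mul hexp).div hprod h4
  rw [mul_one, div_eq_mul_one_div (gaussianLimit u v : ℂ), ← one_div_pow] at h
  refine h.congr' ?_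
  filter_upwards [hprod.eventually_ne h4, eventually_ge_atTop c] with N hN hc
  rw [Pi.div_apply, div_eq_iff hN, mul_assoc, mul_assoc, centralTerm_mul_prod_pairFactor hc,
    mul_comm (tiltedChar ..)]

lemma tendsto_saddleIntegrand (u v : ℝ) :
    Tendsto (fun N ↦ saddleIntegrand N (m N) (saddleRadius N) (saddleTilt N (m N)) u v) atTop
      (nhds (4 / 3 * gaussianLimit u v : ℝ)) := by
  have hsum : ((4 / 3 * gaussianLimit u v : ℝ) : ℂ) =
      ∑' c : ℕ, (gaussianLimit u v : ℂ) * (1 / 4) ^ c := by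
    rw [tsum_mul_left, tsum_geometric_of_norm_lt_one (by norm_num)]
    push_cast
    ring
  simp_rw [hsum, saddleIntegrand_eq_tsum]
  refine tendsto_tsum_of_dominated_convergence
    (summable_centralWeight.mul_right (2 * 10 ^ 10 * ((1 + u ^ 2)⁻¹ * (1 + v ^ 2)⁻¹)))
    (tendsto_phase_mul_centralTerm hm u v) ?_
  filter_upwards [eventually_saddle_bounds hm,
    (tendsto_abs_mul_saddleRadius_pow u three_ne_zero).eventually_lt_const Real.pi_pos,
    (tendsto_abs_mul_saddleRadius_pow v one_ne_zero).eventually_lt_const Real.pi_pos]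
    with N ⟨hN, hr, hl⟩ hu hv c
  rw [norm_mul, norm_phase, one_mul]
  rw [pow_one] at hv
  exact norm_centralTerm_le c (saddleRadius_pos hN) hr hu.le hv.le hl
    (one_le_saddleRadius_sq_mul hN (by linarith))

lemma eventually_norm_saddleIntegrand_le : ∀ᶠ N : ℕ in atTop,
    ∀ u ∈ angleRange (saddleRadius N ^ 3), ∀ v ∈ angleRange (saddleRadius N),
      ‖saddleIntegrand N (m N) (saddleRadius N) (saddleTilt N (m N)) u v‖ ≤
        saddleConst * ((1 + u ^ 2)⁻¹ * (1 + v ^ 2)⁻¹) := by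
  filter_upwards [eventually_saddle_bounds hm] with N ⟨hN, hr, hl⟩ u hu v hv
  have hr0 := saddleRadius_pos hN
  exact norm_saddleIntegrand_le _ hr0 hr (abs_mul_le_pi_of_mem_angleRange (pow_pos hr0 3) hu)
    (abs_mul_le_pi_of_mem_angleRange hr0 hv) hl (one_le_saddleRadius_sq_mul hN (by linarith))

lemma tendsto_tiltProd_ratio :
    Tendsto (fun N ↦ tiltProd N (saddleRadius N ^ 2) (saddleTilt N (m N)) /
      tiltProd N (saddleRadius N ^ 2) 0 * Real.exp (-(saddleRadius N ^ 2 * m N ^ 2 / 2)))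
      atTop (nhds 1) := by
  have hbound := (((tendsto_saddleTilt_sq_div hm).pow 2).const_mul 24).add
    (((tendsto_saddleTilt hm).pow 2).const_mul 8)
  rw [zero_pow two_ne_zero, mul_zero, mul_zero, add_zero] at hbound
  have hlog : Tendsto (fun N ↦ Real.log (tiltProd N (saddleRadius N ^ 2) (saddleTilt N (m N)) /
      tiltProd N (saddleRadius N ^ 2) 0) - saddleRadius N ^ 2 * m N ^ 2 / 2) atTop (nhds 0) := by
    refine squeeze_zero_norm' ?_ hbound
    filter_upwards [eventually_saddle_bounds hm] with N ⟨hN, hr, hl⟩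
    have hr0 := saddleRadius_pos hN
    have htilt : saddleRadius N ^ 2 * m N ^ 2 / 2 =
        saddleTilt N (m N) ^ 2 / (2 * saddleRadius N ^ 2) := by
      rw [saddleTilt]; field_simp
    rw [htilt, div_pow, ← pow_mul]
    exact abs_log_tiltProd_div_sub_le (pow_pos hr0 2) (pow_le_one₀ hr0.le (by linarith))
      (one_le_saddleRadius_pow_four_mul hN) hl
  refine (Real.exp_zero ▸ hlog.rexp).congr fun N ↦ ?_
  rw [sub_eq_add_neg, Real.exp_add,
    Real.exp_log (div_pos (tiltProd_pos _ _ _) (tiltProd_pos _ _ _))]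

end SaddlePoint

section

open MeasureTheory

lemma tendsto_setIntegral_of_dominated_convergence {ι α E : Type*} [MeasurableSpace α]
    {μ : Measure α} [NormedAddCommGroup E] [NormedSpace ℝ E] {𝓕 : Filter ι}
    [𝓕.IsCountablyGenerated] {f : ι → α → E} {g : α → E} {s : ι → Set α} {bound : α → ℝ}
    (hs : ∀ i, MeasurableSet (s i)) (hcover : ∀ x, ∀ᶠ i in 𝓕, x ∈ s i)
    (hf : ∀ i, AEStronglyMeasurable (f i) μ) (hbound : ∀ᶠ i in 𝓕, ∀ x ∈ s i, ‖f i x‖ ≤ bound x)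
    (hbound0 : ∀ x, 0 ≤ bound x) (hint : Integrable bound μ)
    (hlim : ∀ x, Tendsto (fun i ↦ f i x) 𝓕 (nhds (g x))) :
    Tendsto (fun i ↦ ∫ x in s i, f i x ∂μ) 𝓕 (nhds (∫ x, g x ∂μ)) := by
  simp_rw [← integral_indicator (hs _)]
  refine tendsto_integral_filter_of_dominated_convergence bound
    (Eventually.of_forall fun i ↦ (hf i).indicator (hs i)) ?_ hint (ae_of_all _ fun x ↦ ?_)
  · filter_upwards [hbound] with i hi
    refine ae_of_all _ fun x ↦ ?_
    by_cases hx : x ∈ s i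
    · rw [Set.indicator_of_mem hx]
      exact hi x hx
    · rw [Set.indicator_of_notMem hx, norm_zero]
      exact hbound0 x
  · refine (hlim x).congr' ?_
    filter_upwards [hcover x] with i hi
    rw [Set.indicator_of_mem hi]

lemma integral_gaussianLimit_zero :
    ∫ u, gaussianLimit u 0 = √(π / fermiSecondMoment) := by
  rw [← integral_gaussian]
  congr 1 with u
  unfold gaussianLimit
  ring_nf

lemma integral_gaussianLimit :
    ∫ p : ℝ × ℝ, gaussianLimit p.1 p.2 = √(π / fermiSecondMoment) * √(2 * π) := by
  rw [show 2 * π = π / (1 / 2) by ring, ← integral_gaussian, ← integral_gaussian,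
    ← integral_prod_mul]
  congr 1 with p
  rw [gaussianLimit, ← Real.exp_add]
  ring_nf

lemma tendsto_integral_saddleIntegrand {m : ℕ → ℝ}
    (hm : Tendsto (fun N ↦ m N / (N : ℝ) ^ ((3 : ℝ) / 8)) atTop (nhds 0)) :
    Tendsto (fun N ↦ ∫ p in angleRange (saddleRadius N ^ 3) ×ˢ angleRange (saddleRadius N),
      saddleIntegrand N (m N) (saddleRadius N) (saddleTilt N (m N)) p.1 p.2) atTop
      (nhds (4 / 3 * (√(π / fermiSecondMoment) * √(2 * π)) : ℝ)) := by
  rw [← integral_gaussianLimit, ← integral_const_mul, ← integral_complex_ofReal]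
  refine tendsto_setIntegral_of_dominated_convergence
    (bound := fun p ↦ saddleConst * ((1 + p.1 ^ 2)⁻¹ * (1 + p.2 ^ 2)⁻¹))
    (fun N ↦ (measurableSet_angleRange _).prod (measurableSet_angleRange _)) (fun p ↦ ?_)
    (fun N ↦ (continuous_saddleIntegrand N _ _ _).aestronglyMeasurable) ?_
    (fun p ↦ mul_nonneg saddleConst_nonneg (by positivity))
    ((integrable_inv_one_add_sq.mul_prod integrable_inv_one_add_sq).const_mul _)
    fun p ↦ tendsto_saddleIntegrand hm p.1 p.2
  · filter_upwards [eventually_mem_angleRange p.1 three_ne_zero,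
      eventually_mem_angleRange p.2 one_ne_zero] with N hu hv
    exact ⟨hu, by rwa [pow_one] at hv⟩
  · filter_upwards [eventually_norm_saddleIntegrand_le hm] with N hN p hp
    exact hN p.1 hp.1 p.2 hp.2

lemma tendsto_integral_saddleIntegrand_zero :
    Tendsto (fun N ↦ ∫ u in angleRange (saddleRadius N ^ 3),
      saddleIntegrand N 0 (saddleRadius N) 0 u 0) atTop
      (nhds (4 / 3 * √(π / fermiSecondMoment) : ℝ)) := by
  have hm : Tendsto (fun N : ℕ ↦ (0 : ℝ) / (N : ℝ) ^ ((3 : ℝ) / 8)) atTop (nhds 0) := by simp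
  have htilt (N : ℕ) : saddleTilt N 0 = 0 := mul_zero _
  rw [← integral_gaussianLimit_zero, ← integral_const_mul, ← integral_complex_ofReal]
  refine tendsto_setIntegral_of_dominated_convergence
    (bound := fun u ↦ saddleConst * (1 + u ^ 2)⁻¹)
    (fun N ↦ measurableSet_angleRange _) (fun u ↦ eventually_mem_angleRange u three_ne_zero)
    (fun N ↦ ((continuous_saddleIntegrand N _ _ _).comp
      (Continuous.prodMk_left (0 : ℝ))).aestronglyMeasurable) ?_
    (fun u ↦ mul_nonneg saddleConst_nonneg (by positivity))
    (integrable_inv_one_add_sq.const_mul _)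
    fun u ↦ by simpa only [htilt] using tendsto_saddleIntegrand hm u 0
  filter_upwards [eventually_norm_saddleIntegrand_le hm,
    eventually_mem_angleRange 0 one_ne_zero] with N hN h0 u hu
  rw [pow_one] at h0
  simpa [htilt] using hN u hu 0 h0

lemma tendsto_Vd_normalized {m : ℕ → ℤ}
    (hm : Tendsto (fun N ↦ (m N : ℝ) / (N : ℝ) ^ ((3 : ℝ) / 8)) atTop (nhds 0)) :
    Tendsto (fun N ↦ 2 * π / saddleRadius N ^ 3 * (2 * π / saddleRadius N) *
      Real.exp (-saddleRadius N ^ 2 * N + saddleTilt N (m N) * m N) * Vd (m N) N /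
        tiltProd N (saddleRadius N ^ 2) (saddleTilt N (m N))) atTop
      (nhds (4 / 3 * (√(π / fermiSecondMoment) * √(2 * π)))) := by
  rw [← tendsto_ofReal_iff]
  refine (tendsto_integral_saddleIntegrand hm).congr' ?_
  filter_upwards [eventually_gt_atTop 0] with N hN
  exact integral_saddleIntegrand N (m N) _ (saddleRadius_pos hN)

lemma tendsto_VdTotal_normalized :
    Tendsto (fun N ↦ 2 * π / saddleRadius N ^ 3 * Real.exp (-saddleRadius N ^ 2 * N) *
      VdTotal N / tiltProd N (saddleRadius N ^ 2) 0) atTop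
      (nhds (4 / 3 * √(π / fermiSecondMoment))) := by
  rw [← tendsto_ofReal_iff]
  refine tendsto_integral_saddleIntegrand_zero.congr' ?_
  filter_upwards [eventually_gt_atTop 0] with N hN
  exact integral_saddleIntegrand_zero N (saddleRadius_pos hN)

end

lemma sqrt_twentyFour_mul {N : ℕ} (hN : 0 < N) : √(24 * N) = 2 * π / saddleRadius N ^ 2 := by
  have hr := saddleRadius_pos hN
  rw [Real.sqrt_eq_iff_mul_self_eq (by positivity) (by positivity)]
  field_simp
  linear_combination 4 * saddleRadius_pow_four hN

lemma twentyFour_mul_rpow_neg_quarter {N : ℕ} (hN : 0 < N) :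
    (24 * N : ℝ) ^ (-(1 / 4) : ℝ) = saddleRadius N / √(2 * π) := by
  have hr := saddleRadius_pos hN
  have hpow : (24 * N : ℝ)⁻¹ = (saddleRadius N / √(2 * π)) ^ 4 := by
    have hsqrt : √(2 * π) ^ 4 = (2 * π) ^ 2 := by
      rw [pow_mul _ 2 2, Real.sq_sqrt (by positivity)]
    rw [div_pow, hsqrt]
    have hN' : (N : ℝ) ≠ 0 := by exact_mod_cast hN.ne'
    field_simp
    linear_combination -4 * saddleRadius_pow_four hN
  rw [Real.rpow_neg (by positivity), ← Real.inv_rpow (by positivity), hpow,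
    ← Real.rpow_natCast_mul (by positivity)]
  norm_num

lemma gaussian_eq_saddleRadius {N : ℕ} (hN : 0 < N) (m : ℝ) :
    (24 * N : ℝ) ^ (-(1 / 4) : ℝ) * Real.exp (-π * m ^ 2 / √(24 * N)) =
      saddleRadius N / √(2 * π) * Real.exp (-(saddleRadius N ^ 2 * m ^ 2 / 2)) := by
  rw [twentyFour_mul_rpow_neg_quarter hN, sqrt_twentyFour_mul hN]
  congr 2
  have hr := saddleRadius_pos hN
  field_simp

lemma Vd_ratio_eq {N : ℕ} (hN : 0 < N) (m : ℤ) :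
    (Vd m N / VdTotal N : ℝ) /
        (saddleRadius N / √(2 * π) * Real.exp (-(saddleRadius N ^ 2 * m ^ 2 / 2))) =
      (2 * π / saddleRadius N ^ 3 * (2 * π / saddleRadius N) *
        Real.exp (-saddleRadius N ^ 2 * N + saddleTilt N m * m) * Vd m N /
          tiltProd N (saddleRadius N ^ 2) (saddleTilt N m)) /
      (2 * π / saddleRadius N ^ 3 * Real.exp (-saddleRadius N ^ 2 * N) *
        VdTotal N / tiltProd N (saddleRadius N ^ 2) 0) *
      (tiltProd N (saddleRadius N ^ 2) (saddleTilt N m) / tiltProd N (saddleRadius N ^ 2) 0 *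
        Real.exp (-(saddleRadius N ^ 2 * m ^ 2 / 2))) * (√(2 * π) / (2 * π)) := by
  have hr := saddleRadius_pos hN
  have htilt := tiltProd_pos N (saddleRadius N ^ 2) (saddleTilt N m)
  have hzero := tiltProd_pos N (saddleRadius N ^ 2) 0
  have hexp : Real.exp (-saddleRadius N ^ 2 * N + saddleTilt N m * m) =
      Real.exp (-saddleRadius N ^ 2 * N) / Real.exp (-(saddleRadius N ^ 2 * m ^ 2 / 2)) ^ 2 := by
    rw [← Real.exp_nat_mul, ← Real.exp_sub, saddleTilt]
    congr 1
    push_cast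
    ring
  rw [hexp]
  field_simp

theorem stmt_5 (m : ℕ → ℤ)
    (hm : Tendsto (fun N : ℕ => (m N : ℝ) / (N : ℝ) ^ ((3 : ℝ) / 8)) atTop (nhds 0)) :
    Tendsto (fun N : ℕ =>
        ((Vd (m N) N : ℝ) / (VdTotal N : ℝ)) /
          ((24 * (N : ℝ)) ^ (-(1 / 4) : ℝ) *
            Real.exp (-π * (m N : ℝ) ^ 2 / Real.sqrt (24 * N))))
      atTop (nhds 1) := by
  have hV := fermiSecondMoment_pos
  have hlim := (((tendsto_Vd_normalized hm).div tendsto_VdTotal_normalized (by positivity)).mul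
    (tendsto_tiltProd_ratio hm)).mul_const (√(2 * π) / (2 * π))
  have hconst : 4 / 3 * (√(π / fermiSecondMoment) * √(2 * π)) /
      (4 / 3 * √(π / fermiSecondMoment)) * 1 * (√(2 * π) / (2 * π)) = 1 := by
    field_simp
    exact Real.sq_sqrt (by positivity)
  rw [hconst] at hlim
  refine hlim.congr' ?_
  filter_upwards [eventually_gt_atTop 0] with N hN
  rw [gaussian_eq_saddleRadius hN, Vd_ratio_eq hN]
  rfl
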